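/- arXiv:1211.4818 — 4 statements merged into one kernel-verified Lean document; each statement's English description precedes it below -/
import Mathlib

section
/- Assume the probability measure m on ℝ has a finite first moment, and assume either the uniform ellipticity condition (D3) holds, or the nondegeneracy condition (D2) holds and the cumulative distribution function F₀ = H*m satisfies F₀(x) > 0 for all x ∈ ℝ. Let F be the unique weak solution in 𝓕 of the Cauchy problem with initial condition F₀. Then the function (t,x) ↦ a(F_t(x)) is uniformly positive on every compact subset of [0,∞)×ℝ, i.e., for every compact K ⊂ [0,∞)×ℝ there exists c > 0 such that a(F_t(x)) ≥ c for all (t,x) ∈ K. -/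
open MeasureTheory Set Filter Topology Function
open scoped ENNReal

noncomputable section

/-- `primitive f u = ∫₀^u f(v) dv`. -/
def primitive (f : ℝ → ℝ) : ℝ → ℝ := fun u => ∫ v in (0:ℝ)..u, f v

/-- The cumulative distribution function `H * μ` of a measure `μ` on `ℝ`. -/
def cdfOf (μ : MeasureTheory.Measure ℝ) : ℝ → ℝ := fun x => (μ (Set.Iic x)).toReal

/-- Pseudo-inverse of a cdf: `F⁻¹(u) = inf {x | F x > u}`. -/
def pinv (F : ℝ → ℝ) (u : ℝ) : ℝ := sInf {x : ℝ | u < F x}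

/-- Wasserstein distance of order `p` between two cdfs, as an element of `[0,∞]`:
`W_p(F,G) = (∫₀¹ |F⁻¹(u) - G⁻¹(u)|^p du)^(1/p)`. -/
def Wdist (p : ℝ) (F G : ℝ → ℝ) : ℝ≥0∞ :=
  (∫⁻ u in Set.Ioo (0:ℝ) 1, ENNReal.ofReal (|pinv F u - pinv G u| ^ p)) ^ (1/p)

/-- `F` is a weak solution of `∂ₜ F = (1/2) ∂ₓₓ (A (F)) - ∂ₓ (B (F))` with
initial condition `F₀`. -/
def IsWeakSolution (A B : ℝ → ℝ) (F₀ : ℝ → ℝ) (F : ℝ → ℝ → ℝ) : Prop :=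
  ∀ g : ℝ → ℝ → ℝ, ContDiff ℝ (⊤ : ℕ∞) (Function.uncurry g) →
    HasCompactSupport (Function.uncurry g) →
    ∀ t : ℝ, 0 ≤ t →
      ((∫ x : ℝ, g t x * F t x) - ∫ x : ℝ, g 0 x * F₀ x) =
        ∫ x : ℝ, ∫ s in (0:ℝ)..t,
          ((1/2) * A (F s x) * deriv (deriv (fun y => g s y)) x
            + B (F s x) * deriv (fun y => g s y) x
            + F s x * deriv (fun r => g r x) s)

/-- Membership in the class `𝓕`. -/
def MemF (F : ℝ → ℝ → ℝ) : Prop :=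
  ∃ P : ℝ → ProbabilityMeasure ℝ,
    ContinuousOn P (Set.Ici 0) ∧
    (∀ t : ℝ, 0 ≤ t → Integrable (fun x => |x|) (P t : Measure ℝ)) ∧
    (∀ T : ℝ, 0 < T → IntegrableOn (fun t => ∫ x, |x| ∂(P t : Measure ℝ)) (Set.Icc 0 T)) ∧
    (∀ t : ℝ, 0 ≤ t → ∀ x : ℝ, F t x = ((P t : Measure ℝ) (Set.Iic x)).toReal)

/-- A smooth unimodal bump supported in `[-1,1]`. -/
def bphi (x : ℝ) : ℝ := expNegInvGlue (1 - x ^ 2)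

/-- A smooth decreasing step. -/
def bpsi (x : ℝ) : ℝ := ∫ v in x..(1:ℝ), bphi v

lemma bphi_contDiff : ContDiff ℝ (⊤ : ℕ∞) bphi := by
  unfold bphi
  exact expNegInvGlue.contDiff.comp (contDiff_const.sub (contDiff_id.pow 2))

lemma bphi_cont : Continuous bphi := bphi_contDiff.continuous

lemma bphi_nonneg (x : ℝ) : 0 ≤ bphi x := expNegInvGlue.nonneg _

lemma bphi_le_one (x : ℝ) : bphi x ≤ 1 := by
  unfold bphi expNegInvGlue
  split_ifs with h
  · norm_num
  · apply Real.exp_le_one_iff.2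
    have : 0 ≤ (1 - x ^ 2)⁻¹ := by
      apply inv_nonneg.2; push Not at h; exact h.le
    linarith

lemma bphi_zero {x : ℝ} (hx : 1 ≤ |x|) : bphi x = 0 := by
  apply expNegInvGlue.zero_of_nonpos
  have : 1 ≤ |x| ^ 2 := by nlinarith
  rw [sq_abs] at this
  linarith

lemma bphi_zero' {x : ℝ} (hx : x ∉ Icc (-1:ℝ) 1) : bphi x = 0 := by
  apply bphi_zero
  by_contra h
  push Not at h
  exact hx ⟨(abs_lt.1 h).1.le, (abs_lt.1 h).2.le⟩

lemma bphi_hcs : HasCompactSupport bphi :=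
  HasCompactSupport.intro (isCompact_Icc (a := (-1:ℝ)) (b := 1)) fun _ hx => bphi_zero' hx

lemma dphi_contDiff : ContDiff ℝ (⊤ : ℕ∞) (deriv bphi) :=
  (contDiff_infty_iff_deriv.1 bphi_contDiff).2

lemma dphi_cont : Continuous (deriv bphi) := dphi_contDiff.continuous

lemma bphi_hasDeriv (x : ℝ) : HasDerivAt bphi (deriv bphi x) x :=
  ((contDiff_infty_iff_deriv.1 bphi_contDiff).1 x).hasDerivAt

lemma dphi_zero' {x : ℝ} (hx : x ∉ Icc (-1:ℝ) 1) : deriv bphi x = 0 := by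
  have h : bphi =ᶠ[𝓝 x] fun _ => 0 := by
    filter_upwards [isClosed_Icc.isOpen_compl.mem_nhds hx] with y hy
    exact bphi_zero' hy
  rw [h.deriv_eq]; simp

lemma dphi_hcs : HasCompactSupport (deriv bphi) :=
  HasCompactSupport.intro (isCompact_Icc (a := (-1:ℝ)) (b := 1)) fun _ hx => dphi_zero' hx

lemma dphi_formula (x : ℝ) : deriv bphi x = deriv expNegInvGlue (1 - x ^ 2) * (-(2 * x)) := by
  have h1 : HasDerivAt expNegInvGlue (deriv expNegInvGlue (1 - x ^ 2)) (1 - x ^ 2) :=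
    ((expNegInvGlue.contDiff (n := 1)).differentiable (by norm_num) _).hasDerivAt
  have h2 : HasDerivAt (fun y : ℝ => 1 - y ^ 2) (-(2 * x)) x := by
    simpa using ((hasDerivAt_id x).pow 2).const_sub 1
  exact (h1.comp x h2).deriv

lemma dphi_nonneg {x : ℝ} (hx : x ≤ 0) : 0 ≤ deriv bphi x := by
  rw [dphi_formula]
  exact mul_nonneg expNegInvGlue.monotone.deriv_nonneg (by linarith)

lemma dphi_nonpos {x : ℝ} (hx : 0 ≤ x) : deriv bphi x ≤ 0 := by
  rw [dphi_formula]
  exact mul_nonpos_of_nonneg_of_nonpos expNegInvGlue.monotone.deriv_nonneg (by linarith)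

lemma dphi_bound : ∃ D : ℝ, 0 ≤ D ∧ ∀ x, |deriv bphi x| ≤ D := by
  obtain ⟨D, hD⟩ := dphi_cont.bounded_above_of_compact_support dphi_hcs
  exact ⟨D, (norm_nonneg _).trans (hD 0), hD⟩

lemma bpsi_hasDeriv (x : ℝ) : HasDerivAt bpsi (-bphi x) x :=
  intervalIntegral.integral_hasDerivAt_left (bphi_cont.intervalIntegrable _ _)
    bphi_cont.stronglyMeasurable.stronglyMeasurableAtFilter bphi_cont.continuousAt

lemma bpsi_deriv : deriv bpsi = fun x => -bphi x := funext fun x => (bpsi_hasDeriv x).deriv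

lemma bpsi_contDiff : ContDiff ℝ (⊤ : ℕ∞) bpsi := by
  rw [contDiff_infty_iff_deriv, bpsi_deriv]
  exact ⟨fun x => (bpsi_hasDeriv x).differentiableAt, bphi_contDiff.neg⟩

lemma bpsi_anti : Antitone bpsi :=
  antitone_of_deriv_nonpos (fun x => (bpsi_hasDeriv x).differentiableAt) fun x => by
    rw [bpsi_deriv]; simpa using bphi_nonneg x

lemma bpsi_zero {x : ℝ} (hx : 1 ≤ x) : bpsi x = 0 := by
  unfold bpsi
  have : ∀ v ∈ uIcc x 1, bphi v = (fun _ => (0:ℝ)) v := by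
    intro v hv
    rw [uIcc_of_ge hx] at hv
    exact bphi_zero (hv.1.trans (le_abs_self v))
  rw [intervalIntegral.integral_congr this]; simp

lemma bpsi_const {x : ℝ} (hx : x ≤ -1) : bpsi x = bpsi (-1) := by
  unfold bpsi
  rw [← intervalIntegral.integral_add_adjacent_intervals (b := -1)
    (bphi_cont.intervalIntegrable _ _) (bphi_cont.intervalIntegrable _ _)]
  have : ∀ v ∈ uIcc x (-1), bphi v = (fun _ => (0:ℝ)) v := by
    intro v hv
    rw [uIcc_of_le hx] at hv
    exact bphi_zero (by rw [abs_of_neg (by linarith [hv.2])]; linarith [hv.2])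
  rw [intervalIntegral.integral_congr this]; simp

lemma bpsi_pos : 0 < bpsi (-1) := by
  unfold bpsi
  apply intervalIntegral.intervalIntegral_pos_of_pos_on (bphi_cont.intervalIntegrable _ _) _
    (by norm_num)
  intro x hx
  apply expNegInvGlue.pos_of_pos
  nlinarith [hx.1, hx.2]

lemma integrable_bdd_mul_cs {f h : ℝ → ℝ} {C : ℝ} (hf : Measurable f) (hfC : ∀ x, |f x| ≤ C)
    (hh : Continuous h) (hc : HasCompactSupport h) (c : ℝ) :
    Integrable (fun x => f x * h (x + c)) := by
  refine Integrable.bdd_mul (c := C) ?_ hf.aestronglyMeasurable (Eventually.of_forall hfC)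
  exact (hh.integrable_of_hasCompactSupport hc).comp_add_right c

lemma integral_mono_dphi {G : ℝ → ℝ} {C : ℝ} (hG : Monotone G) (hGC : ∀ x, |G x| ≤ C) (c : ℝ) :
    0 ≤ ∫ x, G x * (-deriv bphi (x + c)) := by
  have hi : Integrable (fun x => deriv bphi (x + c)) :=
    (dphi_cont.integrable_of_hasCompactSupport dphi_hcs).comp_add_right c
  have h0 : ∫ x, deriv bphi (x + c) = 0 := by
    apply integral_eq_zero_of_hasDerivAt_of_integrable (f := fun x => bphi (x + c)) _ hi
    · exact (bphi_cont.integrable_of_hasCompactSupport bphi_hcs).comp_add_right c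
    · intro x
      exact (bphi_hasDeriv (x + c)).comp_add_const x c
  have h1 : ∫ x, G x * (-deriv bphi (x + c)) =
      ∫ x, (G x - G (-c)) * (-deriv bphi (x + c)) := by
    have : ∀ x, (G x - G (-c)) * (-deriv bphi (x + c)) =
      -(G x * deriv bphi (x + c)) + G (-c) * deriv bphi (x + c) := fun x => by ring
    simp_rw [this]
    have hj : Integrable fun x => -(G x * deriv bphi (x + c)) :=
      (integrable_bdd_mul_cs hG.measurable hGC dphi_cont dphi_hcs c).neg
    rw [integral_add hj (hi.const_mul _), integral_const_mul, h0]
    simp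
  rw [h1]
  apply integral_nonneg
  intro x
  rcases le_total x (-c) with h | h
  · have := hG h
    have := dphi_nonneg (x := x + c) (by linarith)
    show 0 ≤ (G x - G (-c)) * (-deriv bphi (x + c))
    nlinarith
  · have := hG h
    have := dphi_nonpos (x := x + c) (by linarith)
    show 0 ≤ (G x - G (-c)) * (-deriv bphi (x + c))
    nlinarith

lemma fixed_time {A B G : ℝ → ℝ} {L M D : ℝ} (hA : Monotone A) (hB : Continuous B)
    (hL : 0 ≤ L) (hM : 0 ≤ M) (hD : 0 ≤ D)
    (hAL : ∀ u, |A u| ≤ L * |u|) (hBM : ∀ u, |B u| ≤ M * |u|)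
    (hG : Monotone G) (hG0 : ∀ x, 0 ≤ G x) (hG1 : ∀ x, G x ≤ 1)
    (hDb : ∀ x, |deriv bphi x| ≤ D) (c n : ℝ) :
    -((L * D + 2 * M) * G (-n + 1)) ≤
      ∫ x, ((1/2) * A (G x) * (-deriv bphi (x + c) + deriv bphi (x + n))
        + B (G x) * (-bphi (x + c) + bphi (x + n)) + G x * (M * bphi (x + c))) := by
  have hAG : ∀ x, |A (G x)| ≤ L * G x := fun x => by
    simpa [abs_of_nonneg (hG0 x)] using hAL (G x)
  have hBG : ∀ x, |B (G x)| ≤ M * G x := fun x => by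
    simpa [abs_of_nonneg (hG0 x)] using hBM (G x)
  have hAG1 : ∀ x, |A (G x)| ≤ L := fun x => (hAG x).trans (by nlinarith [hG1 x])
  have hBG1 : ∀ x, |B (G x)| ≤ M := fun x => (hBG x).trans (by nlinarith [hG1 x])
  have hG1' : ∀ x, |G x| ≤ 1 := fun x => by rw [abs_of_nonneg (hG0 x)]; exact hG1 x
  have mA : Measurable fun x => A (G x) := (hA.comp hG).measurable
  have mB : Measurable fun x => B (G x) := hB.measurable.comp hG.measurable
  have iA := fun c => integrable_bdd_mul_cs mA hAG1 dphi_cont dphi_hcs c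
  have iB := fun c => integrable_bdd_mul_cs mB hBG1 bphi_cont bphi_hcs c
  have iG := fun c => integrable_bdd_mul_cs hG.measurable hG1' bphi_cont bphi_hcs c
  have i1 : Integrable fun x => (1/2) * (A (G x) * (-deriv bphi (x + c))) := by
    simpa using ((iA c).neg.const_mul (1/2))
  have i2 : Integrable fun x => M * (G x * bphi (x + c)) - B (G x) * bphi (x + c) :=
    ((iG c).const_mul M).sub (iB c)
  have i3 : Integrable fun x => (1/2) * (A (G x) * deriv bphi (x + n)) + B (G x) * bphi (x + n) :=
    ((iA n).const_mul _).add (iB n)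
  have e : ∀ x, ((1/2) * A (G x) * (-deriv bphi (x + c) + deriv bphi (x + n))
        + B (G x) * (-bphi (x + c) + bphi (x + n)) + G x * (M * bphi (x + c))) =
      ((1/2) * (A (G x) * (-deriv bphi (x + c)))
        + (M * (G x * bphi (x + c)) - B (G x) * bphi (x + c)))
        + ((1/2) * (A (G x) * deriv bphi (x + n)) + B (G x) * bphi (x + n)) := fun x => by ring
  simp_rw [e]
  have i12 : Integrable fun x => (1/2) * (A (G x) * (-deriv bphi (x + c)))
      + (M * (G x * bphi (x + c)) - B (G x) * bphi (x + c)) := i1.add i2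
  rw [integral_add i12 i3, integral_add i1 i2, integral_const_mul]
  have p1 := integral_mono_dphi (hA.comp hG) hAG1 c
  have p2 : 0 ≤ ∫ x, (M * (G x * bphi (x + c)) - B (G x) * bphi (x + c)) := by
    apply integral_nonneg
    intro x
    have := (abs_le.1 (hBG x)).2
    have := bphi_nonneg (x + c)
    show 0 ≤ M * (G x * bphi (x + c)) - B (G x) * bphi (x + c)
    nlinarith
  have p3 : ‖∫ x, ((1/2) * (A (G x) * deriv bphi (x + n)) + B (G x) * bphi (x + n))‖ ≤
      (L * D + 2 * M) * G (-n + 1) := by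
    have hz : ∀ x, x ∉ Icc (-n - 1) (-n + 1) →
        (1/2) * (A (G x) * deriv bphi (x + n)) + B (G x) * bphi (x + n) = 0 := by
      intro x hx
      have : x + n ∉ Icc (-1:ℝ) 1 := fun h => hx ⟨by linarith [h.1], by linarith [h.2]⟩
      rw [dphi_zero' this, bphi_zero' this]; simp
    rw [← setIntegral_eq_integral_of_forall_compl_eq_zero hz]
    have := norm_setIntegral_le_of_norm_le_const (μ := volume) (s := Icc (-n - 1) (-n + 1))
      (f := fun x => (1/2) * (A (G x) * deriv bphi (x + n)) + B (G x) * bphi (x + n))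
      (C := (1/2 * L * D + M) * G (-n + 1)) (by simp) ?_
    · refine this.trans (le_of_eq ?_)
      simp only [Real.volume_real_Icc]
      rw [max_eq_left (by linarith)]; ring
    · intro x hx
      have hGx := hG hx.2
      have g0 := hG0 (-n+1)
      have a1 : |A (G x) * deriv bphi (x + n)| ≤ L * G (-n + 1) * D := by
        rw [abs_mul]
        exact mul_le_mul ((hAG x).trans (by gcongr)) (hDb _) (abs_nonneg _) (by positivity)
      have b1 : |B (G x) * bphi (x + n)| ≤ M * G (-n + 1) * 1 := by
        rw [abs_mul]
        refine mul_le_mul ((hBG x).trans (by gcongr)) ?_ (abs_nonneg _) (by positivity)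
        rw [abs_of_nonneg (bphi_nonneg _)]; exact bphi_le_one _
      rw [Real.norm_eq_abs]
      refine (abs_add_le _ _).trans ?_
      rw [abs_mul, abs_of_pos (by norm_num : (0:ℝ) < 1/2)]
      nlinarith
  have p3' := (abs_le.1 (by simpa using p3)).1
  simp only [comp_apply] at p1
  linarith

lemma usc_joint {Q : ℝ → ProbabilityMeasure ℝ} (hQ : Continuous Q) :
    UpperSemicontinuous (fun p : ℝ × ℝ => ((Q p.1 : Measure ℝ) (Iic p.2)).toReal) := by
  rintro ⟨s, x⟩ r hr
  have hrc : ContinuousWithinAt (fun z => ((Q s : Measure ℝ) (Iic z)).toReal) (Ici x) x := by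
    have := (ProbabilityTheory.cdf (Q s : Measure ℝ)).right_continuous x
    refine this.congr (fun z _ => ?_) ?_ <;> rw [ProbabilityTheory.cdf_eq_real] <;> rfl
  have h1 : ∀ᶠ z in 𝓝[≥] x, ((Q s : Measure ℝ) (Iic z)).toReal < r :=
    hrc.eventually (gt_mem_nhds hr)
  have h2 : ∀ᶠ z in 𝓝[>] x, ((Q s : Measure ℝ) (Iic z)).toReal < r :=
    h1.filter_mono (nhdsWithin_mono _ Ioi_subset_Ici_self)
  obtain ⟨z, hz, hxz⟩ := (h2.and self_mem_nhdsWithin).exists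
  have hr0 : 0 ≤ r := ENNReal.toReal_nonneg.trans hr.le
  have h3 : (Q s : Measure ℝ) (Iic z) < ENNReal.ofReal r := by
    rwa [ENNReal.lt_ofReal_iff_toReal_lt (measure_ne_top _ _)]
  have h4 := (ProbabilityMeasure.limsup_measure_closed_le_of_tendsto (hQ.tendsto s)
    (isClosed_Iic (a := z))).trans_lt h3
  have h5 : ∀ᶠ s' in 𝓝 s, (Q s' : Measure ℝ) (Iic z) < ENNReal.ofReal r :=
    eventually_lt_of_limsup_lt h4
  have h6 : ∀ᶠ p : ℝ × ℝ in 𝓝 (s, x), (Q p.1 : Measure ℝ) (Iic z) < ENNReal.ofReal r ∧ p.2 < z :=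
    (continuous_fst.tendsto (s, x)|>.eventually h5).and
      (continuous_snd.tendsto (s, x)|>.eventually (gt_mem_nhds hxz))
  filter_upwards [h6] with p hp
  rw [← ENNReal.lt_ofReal_iff_toReal_lt (measure_ne_top _ _)]
  exact (measure_mono (Iic_subset_Iic.2 hp.2.le)).trans_lt hp.1

lemma weak_ineq {A B F₀ : ℝ → ℝ} {F : ℝ → ℝ → ℝ} {L M D : ℝ} (hA : Monotone A)
    (hB : Continuous B) (hL : 0 ≤ L) (hM : 0 ≤ M) (hD : 0 ≤ D)
    (hAL : ∀ u, |A u| ≤ L * |u|) (hBM : ∀ u, |B u| ≤ M * |u|)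
    (hFm : Measurable (uncurry F))
    (hFmono : ∀ s, Monotone (F s)) (hF0 : ∀ s x, 0 ≤ F s x) (hF1 : ∀ s x, F s x ≤ 1)
    (hDb : ∀ x, |deriv bphi x| ≤ D) (hw : IsWeakSolution A B F₀ F)
    (y n t : ℝ) (ht : 0 ≤ t) :
    (∫ x, (bpsi (x + -y) - bpsi (x + n)) * F₀ x)
      - (L * D + 2 * M) * ∫ s in (0:ℝ)..t, F s (-n + 1)
      ≤ ∫ x, (bpsi (x + (-(M * t) - y)) - bpsi (x + n)) * F t x := by
  let θ : ContDiffBump (0:ℝ) := ⟨t + 1, t + 2, by linarith, by linarith⟩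
  let g : ℝ → ℝ → ℝ := fun s x => θ s * (bpsi (x + (-(M * s) - y)) - bpsi (x + n))
  have hg : ContDiff ℝ (⊤ : ℕ∞) (uncurry g) := by
    show ContDiff ℝ (⊤ : ℕ∞)
      (fun p : ℝ × ℝ => θ p.1 * (bpsi (p.2 + (-(M * p.1) - y)) - bpsi (p.2 + n)))
    refine (θ.contDiff.comp contDiff_fst).mul ((bpsi_contDiff.comp ?_).sub (bpsi_contDiff.comp ?_))
    · fun_prop
    · fun_prop
  have hgc : HasCompactSupport (uncurry g) := by
    refine HasCompactSupport.intro
      (K := Icc (-(t+2)) (t+2) ×ˢ Icc (-(|y| + |n| + M * (t+2) + 2)) (|y| + |n| + M * (t+2) + 2))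
      (isCompact_Icc.prod isCompact_Icc) ?_
    rintro ⟨s, x⟩ hsx
    show θ s * (bpsi (x + (-(M * s) - y)) - bpsi (x + n)) = 0
    by_cases hs : s ∈ Icc (-(t+2)) (t+2)
    · have hx : ¬ x ∈ Icc (-(|y| + |n| + M * (t+2) + 2)) (|y| + |n| + M * (t+2) + 2) :=
        fun h => hsx ⟨hs, h⟩
      have m1 : M * s ≤ M * (t+2) := mul_le_mul_of_nonneg_left hs.2 hM
      have m2 : M * (-(t+2)) ≤ M * s := mul_le_mul_of_nonneg_left hs.1 hM
      have y1 := neg_abs_le y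
      have y2 := le_abs_self y
      have n1 := neg_abs_le n
      have n2 := le_abs_self n
      rw [mem_Icc, not_and_or, not_le, not_le] at hx
      rcases hx with hx | hx
      · rw [bpsi_const (x := x + (-(M * s) - y)) (by linarith [abs_nonneg n]),
          bpsi_const (x := x + n) (by linarith [abs_nonneg y, mul_nonneg hM (by linarith : 0 ≤ t+2)])]
        simp
      · rw [bpsi_zero (x := x + (-(M * s) - y)) (by linarith [abs_nonneg n]),
          bpsi_zero (x := x + n) (by linarith [abs_nonneg y, mul_nonneg hM (by linarith : 0 ≤ t+2)])]
        simp
    · rw [θ.zero_of_le_dist, zero_mul]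
      rw [Real.dist_eq, sub_zero]
      by_contra h
      exact hs (abs_le.1 (not_le.1 h).le)
  have hθ : ∀ s ∈ Icc 0 t, θ =ᶠ[𝓝 s] fun _ => 1 := by
    intro s hs
    filter_upwards [Ioo_mem_nhds (show -1 < s by linarith [hs.1]) (show s < t + 1 by linarith [hs.2])]
      with r hr
    apply θ.one_of_mem_closedBall
    rw [Metric.mem_closedBall, Real.dist_eq, sub_zero]
    exact abs_le.2 ⟨by show -(t+1) ≤ r; linarith [hr.1], hr.2.le⟩
  have hgs : ∀ s ∈ Icc 0 t, g s = fun x => bpsi (x + (-(M * s) - y)) - bpsi (x + n) := by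
    intro s hs
    funext x
    show θ s * _ = _
    rw [(hθ s hs).eq_of_nhds, one_mul]
  have d1 : ∀ s ∈ Icc 0 t, deriv (fun x => g s x) =
      fun x => -bphi (x + (-(M * s) - y)) + bphi (x + n) := by
    intro s hs
    show deriv (g s) = _
    rw [hgs s hs]
    funext x
    have := ((bpsi_hasDeriv (x + (-(M * s) - y))).comp_add_const x _).sub
      ((bpsi_hasDeriv (x + n)).comp_add_const x n)
    refine (this.congr_deriv ?_).deriv
    ring
  have d2 : ∀ s ∈ Icc 0 t, ∀ x, deriv (deriv (fun x => g s x)) x =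
      -deriv bphi (x + (-(M * s) - y)) + deriv bphi (x + n) := by
    intro s hs x
    rw [d1 s hs]
    have := ((bphi_hasDeriv (x + (-(M * s) - y))).comp_add_const x _).neg.add
      ((bphi_hasDeriv (x + n)).comp_add_const x n)
    exact this.deriv
  have d3 : ∀ s ∈ Icc 0 t, ∀ x, deriv (fun r => g r x) s = M * bphi (x + (-(M * s) - y)) := by
    intro s hs x
    have e : (fun r => g r x) =ᶠ[𝓝 s] fun r => bpsi (x + (-(M * r) - y)) - bpsi (x + n) := by
      filter_upwards [hθ s hs] with r hr
      show θ r * _ = _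
      rw [hr, one_mul]
    rw [e.deriv_eq]
    have h1 : HasDerivAt (fun r => x + (-(M * r) - y)) (-M) s := by
      simpa using ((((hasDerivAt_id s).const_mul M).neg).sub_const y).const_add x
    have h2 := ((bpsi_hasDeriv (x + (-(M * s) - y))).comp s h1).sub_const (bpsi (x + n))
    refine (h2.congr_deriv ?_).deriv
    ring
  have key := hw g hg hgc t ht
  rw [hgs t ⟨ht, le_rfl⟩, hgs 0 ⟨le_rfl, ht⟩] at key
  let J : ℝ → ℝ → ℝ := fun s x =>
    (1/2) * A (F s x) * (-deriv bphi (x + (-(M * s) - y)) + deriv bphi (x + n))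
        + B (F s x) * (-bphi (x + (-(M * s) - y)) + bphi (x + n))
        + F s x * (M * bphi (x + (-(M * s) - y)))
  have hJ : (∫ x : ℝ, ∫ s in (0:ℝ)..t,
          ((1/2) * A (F s x) * deriv (deriv (fun y => g s y)) x
            + B (F s x) * deriv (fun y => g s y) x
            + F s x * deriv (fun r => g r x) s)) = ∫ x, ∫ s in Ioc 0 t, J s x := by
    congr 1
    funext x
    rw [intervalIntegral.integral_of_le ht]
    apply setIntegral_congr_fun measurableSet_Ioc
    intro s hs
    have hs' : s ∈ Icc 0 t := ⟨hs.1.le, hs.2⟩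
    simp only [J]
    rw [d2 s hs' x, d3 s hs' x, d1 s hs']
  have hJm : Measurable (uncurry J) := by
    have hdm : Measurable (deriv bphi) := dphi_cont.measurable
    have hpm : Measurable bphi := bphi_cont.measurable
    have hAm : Measurable fun p : ℝ × ℝ => A (F p.1 p.2) := hA.measurable.comp hFm
    have hBm : Measurable fun p : ℝ × ℝ => B (F p.1 p.2) := hB.measurable.comp hFm
    have hFm' : Measurable fun p : ℝ × ℝ => F p.1 p.2 := hFm
    have k1 : Measurable fun p : ℝ × ℝ => p.2 + (-(M * p.1) - y) := by fun_prop
    have k2 : Measurable fun p : ℝ × ℝ => p.2 + n := by fun_prop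
    exact ((((measurable_const.mul hAm).mul ((hdm.comp k1).neg.add (hdm.comp k2)))).add
      (hBm.mul ((hpm.comp k1).neg.add (hpm.comp k2)))).add
      (hFm'.mul (measurable_const.mul (hpm.comp k1)))
  have hJi : Integrable (uncurry J) ((volume.restrict (Ioc 0 t)).prod volume) := by
    let R := |y| + |n| + M * t + 2
    let C := 1/2 * L * (D + D) + M * (1 + 1) + 1 * (M * 1)
    have hbd : Integrable (fun p : ℝ × ℝ => (1:ℝ) * (Icc (-R) R).indicator (fun _ => C) p.2)
        ((volume.restrict (Ioc 0 t)).prod volume) := by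
      refine Integrable.mul_prod (f := fun _ => (1:ℝ)) (g := (Icc (-R) R).indicator (fun _ => C))
        (integrable_const _) ?_
      rw [integrable_indicator_iff measurableSet_Icc]
      exact integrableOn_const (by simp)
    refine hbd.mono' hJm.aestronglyMeasurable ?_
    have hae : ∀ᵐ p ∂((volume.restrict (Ioc (0:ℝ) t)).prod (volume : Measure ℝ)),
        p.1 ∈ Ioc 0 t := by
      have : (volume.restrict (Ioc (0:ℝ) t)).prod (volume : Measure ℝ) =
          (volume.prod volume).restrict (Ioc 0 t ×ˢ univ) := by
        rw [← Measure.prod_restrict, Measure.restrict_univ]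
      rw [this]
      filter_upwards [ae_restrict_mem (measurableSet_Ioc.prod MeasurableSet.univ)] with p hp
      exact hp.1
    filter_upwards [hae] with p hp
    rw [one_mul]
    obtain ⟨s, x⟩ := p
    simp only [uncurry, J]
    simp only at hp
    by_cases hx : x ∈ Icc (-R) R
    · rw [indicator_of_mem hx, Real.norm_eq_abs]
      have a0 : |F s x| ≤ 1 := by rw [abs_of_nonneg (hF0 s x)]; exact hF1 s x
      have a1 : |A (F s x)| ≤ L := (hAL _).trans (by nlinarith)
      have a2 : |B (F s x)| ≤ M := (hBM _).trans (by nlinarith)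
      have ph : ∀ z, |bphi z| ≤ 1 := fun z => by
        rw [abs_of_nonneg (bphi_nonneg z)]; exact bphi_le_one z
      have b1 : |-deriv bphi (x + (-(M * s) - y)) + deriv bphi (x + n)| ≤ D + D :=
        (abs_add_le _ _).trans (add_le_add (by rw [abs_neg]; exact hDb _) (hDb _))
      have b2 : |-bphi (x + (-(M * s) - y)) + bphi (x + n)| ≤ 1 + 1 :=
        (abs_add_le _ _).trans (add_le_add (by rw [abs_neg]; exact ph _) (ph _))
      refine (abs_add_le _ _).trans (add_le_add ((abs_add_le _ _).trans (add_le_add ?_ ?_)) ?_)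
      · rw [abs_mul, abs_mul, abs_of_pos (by norm_num : (0:ℝ) < 1/2)]
        exact mul_le_mul (by linarith) b1 (abs_nonneg _) (by linarith)
      · rw [abs_mul]
        exact mul_le_mul a2 b2 (abs_nonneg _) hM
      · rw [abs_mul, abs_mul, abs_of_nonneg hM]
        exact mul_le_mul a0 (mul_le_mul_of_nonneg_left (ph _) hM) (by positivity) zero_le_one
    · rw [indicator_of_notMem hx]
      have m1 : M * s ≤ M * t := mul_le_mul_of_nonneg_left hp.2 hM
      have m2 : 0 ≤ M * s := mul_nonneg hM hp.1.le
      have y1 := neg_abs_le y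
      have y2 := le_abs_self y
      have n1 := neg_abs_le n
      have n2 := le_abs_self n
      have y3 := abs_nonneg y
      have n3 := abs_nonneg n
      have z1 : x + (-(M * s) - y) ∉ Icc (-1:ℝ) 1 := fun h =>
        hx ⟨by linarith [h.1], by linarith [h.2]⟩
      have z2 : x + n ∉ Icc (-1:ℝ) 1 := fun h =>
        hx ⟨by linarith [h.1], by linarith [h.2]⟩
      rw [dphi_zero' z1, dphi_zero' z2, bphi_zero' z1, bphi_zero' z2]
      simp
  rw [hJ, ← integral_integral_swap hJi] at key
  have hlow : -((L * D + 2 * M) * ∫ s in (0:ℝ)..t, F s (-n + 1)) ≤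
      ∫ s in Ioc 0 t, ∫ x, J s x := by
    rw [intervalIntegral.integral_of_le ht, ← integral_const_mul, ← integral_neg]
    have hm : Measurable fun s => F s (-n + 1) :=
      hFm.comp (measurable_id.prodMk measurable_const)
    have hi : Integrable (fun s => F s (-n + 1)) (volume.restrict (Ioc 0 t)) := by
      refine Integrable.mono' (integrable_const (1:ℝ)) hm.aestronglyMeasurable
        (Eventually.of_forall fun s => ?_)
      rw [Real.norm_eq_abs, abs_of_nonneg (hF0 s _)]
      exact hF1 s _
    refine integral_mono (hi.const_mul _).neg hJi.integral_prod_left fun s => ?_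
    exact fixed_time hA hB hL hM hD hAL hBM (hFmono s) (hF0 s) (hF1 s) hDb _ n
  have e0 : (-(M * 0) - y) = -y := by ring
  rw [e0] at key
  simp only at key
  linarith

lemma sol_pos {A B F₀ : ℝ → ℝ} {F : ℝ → ℝ → ℝ} {L M : ℝ} (hA : Monotone A)
    (hB : Continuous B) (hL : 0 ≤ L) (hM : 0 ≤ M)
    (hAL : ∀ u, |A u| ≤ L * |u|) (hBM : ∀ u, |B u| ≤ M * |u|)
    (hFm : Measurable (uncurry F))
    (hFmono : ∀ s, Monotone (F s)) (hF0 : ∀ s x, 0 ≤ F s x) (hF1 : ∀ s x, F s x ≤ 1)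
    (hFlim : ∀ s, Tendsto (F s) atBot (𝓝 0))
    (hw : IsWeakSolution A B F₀ F)
    (h0mono : Monotone F₀) (h0pos : ∀ x, 0 < F₀ x) (h01 : ∀ x, F₀ x ≤ 1)
    (z t : ℝ) (ht : 0 ≤ t) : 0 < F t z := by
  obtain ⟨D, hD, hDb⟩ := dphi_bound
  by_contra hneg
  have hz : F t z = 0 := le_antisymm (not_lt.1 hneg) (hF0 t z)
  set y := z - M * t - 1 with hy
  have key : ∀ n : ℝ, 1 - z ≤ n → -y + 3 ≤ n →
      bpsi (-1) * F₀ (y - 2) ≤ (L * D + 2 * M) * ∫ s in (0:ℝ)..t, F s (-n + 1) := by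
    intro n hn1 hn2
    have h := weak_ineq hA hB hL hM hD hAL hBM hFm hFmono hF0 hF1 hDb hw y n t ht
    have hr : ∫ x, (bpsi (x + (-(M * t) - y)) - bpsi (x + n)) * F t x = 0 := by
      have : ∀ x, (bpsi (x + (-(M * t) - y)) - bpsi (x + n)) * F t x = 0 := by
        intro x
        rcases le_total x z with hx | hx
        · rw [le_antisymm ((hFmono t hx).trans hz.le) (hF0 t x), mul_zero]
        · rw [bpsi_zero (x := x + (-(M * t) - y)) (by rw [hy]; linarith),
            bpsi_zero (x := x + n) (by linarith)]
          simp
      simp [this]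
    have hcs : HasCompactSupport fun x => bpsi (x + -y) - bpsi (x + n) := by
      refine HasCompactSupport.intro (isCompact_Icc (a := -n - 1) (b := y + 1)) fun x hx => ?_
      rw [mem_Icc, not_and_or, not_le, not_le] at hx
      rcases hx with hx | hx
      · rw [bpsi_const (x := x + -y) (by linarith), bpsi_const (x := x + n) (by linarith)]
        simp
      · rw [bpsi_zero (x := x + -y) (by linarith), bpsi_zero (x := x + n) (by linarith)]
        simp
    have hcont : Continuous fun x => bpsi (x + -y) - bpsi (x + n) := by
      have := bpsi_contDiff.continuous
      fun_prop
    have hi : Integrable fun x => (bpsi (x + -y) - bpsi (x + n)) * F₀ x := by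
      have := integrable_bdd_mul_cs h0mono.measurable (C := 1)
        (fun x => by rw [abs_of_pos (h0pos x)]; exact h01 x) hcont hcs 0
      simpa [mul_comm] using this
    have hl : bpsi (-1) * F₀ (y - 2) ≤ ∫ x, (bpsi (x + -y) - bpsi (x + n)) * F₀ x := by
      have e : ∫ x, (Icc (y - 2) (y - 1)).indicator (fun _ => bpsi (-1) * F₀ (y - 2)) x =
          bpsi (-1) * F₀ (y - 2) := by
        rw [integral_indicator measurableSet_Icc, setIntegral_const, Real.volume_real_Icc]
        rw [show y - 1 - (y - 2) = 1 by ring]; simp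
      rw [← e]
      refine integral_mono ?_ hi fun x => ?_
      · rw [integrable_indicator_iff measurableSet_Icc]
        exact integrableOn_const (by simp)
      · by_cases hx : x ∈ Icc (y - 2) (y - 1)
        · rw [indicator_of_mem hx]
          show _ ≤ (bpsi (x + -y) - bpsi (x + n)) * F₀ x
          rw [bpsi_const (x := x + -y) (by linarith [hx.2]),
            bpsi_zero (x := x + n) (by linarith [hx.1]), sub_zero]
          exact mul_le_mul_of_nonneg_left (h0mono hx.1) bpsi_pos.le
        · rw [indicator_of_notMem hx]
          exact mul_nonneg (sub_nonneg.2 (bpsi_anti (by linarith))) (h0pos x).le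
    linarith
  have hlim : Tendsto (fun n : ℕ => ∫ s in (0:ℝ)..t, F s (-(n:ℝ) + 1)) atTop (𝓝 0) := by
    have : Tendsto (fun n : ℕ => ∫ s in (0:ℝ)..t, F s (-(n:ℝ) + 1)) atTop
        (𝓝 (∫ s in (0:ℝ)..t, (0:ℝ))) := by
      refine intervalIntegral.tendsto_integral_filter_of_dominated_convergence (fun _ => (1:ℝ))
        (Eventually.of_forall fun n => ?_) (Eventually.of_forall fun n => ?_) (by simp) ?_
      · exact (hFm.comp (measurable_id.prodMk measurable_const)).aestronglyMeasurable
      · refine Eventually.of_forall fun s _ => ?_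
        rw [Real.norm_eq_abs, abs_of_nonneg (hF0 s _)]
        exact hF1 s _
      · refine Eventually.of_forall fun s _ => (hFlim s).comp ?_
        exact tendsto_atBot_add_const_right _ _
          (tendsto_neg_atTop_atBot.comp tendsto_natCast_atTop_atTop)
    simpa using this
  have hle : bpsi (-1) * F₀ (y - 2) ≤ (L * D + 2 * M) * 0 := by
    refine ge_of_tendsto (hlim.const_mul _) ?_
    filter_upwards [tendsto_natCast_atTop_atTop.eventually_ge_atTop (1 - z),
      tendsto_natCast_atTop_atTop.eventually_ge_atTop (-y + 3)] with n h1 h2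
    exact key n h1 h2
  have := mul_pos bpsi_pos (h0pos (y - 2))
  linarith

lemma ext_facts {a : ℝ → ℝ} (ha : ContinuousOn a (Icc 0 1)) :
    ∃ a' : ℝ → ℝ, Continuous a' ∧ (∀ u ∈ Icc (0:ℝ) 1, a' u = a u) ∧
      (∀ u, ∃ v ∈ Icc (0:ℝ) 1, a' u = a v) ∧
      (∃ L, 0 ≤ L ∧ ∀ u, |primitive a' u| ≤ L * |u|) ∧
      (∀ u ∈ Icc (0:ℝ) 1, primitive a' u = primitive a u) ∧
      Continuous (primitive a') := by
  have hc : Continuous (IccExtend (zero_le_one' ℝ) ((Icc (0:ℝ) 1).domRestrict a)) :=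
    (continuousOn_iff_continuous_domRestrict.1 ha).Icc_extend'
  have heq : ∀ u ∈ Icc (0:ℝ) 1, IccExtend (zero_le_one' ℝ) ((Icc (0:ℝ) 1).domRestrict a) u = a u :=
    fun u hu => by rw [IccExtend_of_mem _ _ hu]; rfl
  have hval : ∀ u, ∃ v ∈ Icc (0:ℝ) 1,
      IccExtend (zero_le_one' ℝ) ((Icc (0:ℝ) 1).domRestrict a) u = a v :=
    fun u => ⟨projIcc 0 1 zero_le_one u, (projIcc 0 1 zero_le_one u).2, rfl⟩
  refine ⟨_, hc, heq, hval, ?_, ?_, ?_⟩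
  · obtain ⟨L, hL⟩ := isCompact_Icc.exists_bound_of_continuousOn ha
    refine ⟨L, (norm_nonneg _).trans (hL 0 (by simp)), fun u => ?_⟩
    have := intervalIntegral.norm_integral_le_of_norm_le_const (a := 0) (b := u) (C := L)
      (f := IccExtend (zero_le_one' ℝ) ((Icc (0:ℝ) 1).domRestrict a)) (fun x _ => by
        obtain ⟨v, hv, e⟩ := hval x
        rw [e]; exact hL v hv)
    simpa [primitive] using this
  · intro u hu
    refine intervalIntegral.integral_congr fun v hv => heq v ?_
    rw [uIcc_of_le hu.1] at hv
    exact ⟨hv.1, hv.2.trans hu.2⟩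
  · exact intervalIntegral.continuous_primitive (fun _ _ => hc.intervalIntegrable _ _) 0

/-- Under (D3), or under (D2) together with positivity of `F₀`, the function
`(t,x) ↦ a(F_t(x))` is uniformly positive on compact subsets of `[0,∞) × ℝ`. -/
theorem diffusion_coefficient_uniformly_positive
    (a b : ℝ → ℝ)
    (ha : ContinuousOn a (Set.Icc 0 1)) (hb : ContinuousOn b (Set.Icc 0 1))
    (ha0 : ∀ u ∈ Set.Icc (0:ℝ) 1, 0 ≤ a u)
    (m : Measure ℝ) [IsProbabilityMeasure m]
    (hm : Integrable (fun x => |x|) m)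
    (halt : (∃ c > (0:ℝ), ∀ u ∈ Set.Icc (0:ℝ) 1, c ≤ a u) ∨
      ((∀ u ∈ Set.Ioc (0:ℝ) 1, 0 < a u) ∧ ∀ x : ℝ, 0 < cdfOf m x))
    (F : ℝ → ℝ → ℝ)
    (hF : IsWeakSolution (primitive a) (primitive b) (cdfOf m) F) (hFmem : MemF F) :
    ∀ K : Set (ℝ × ℝ), IsCompact K → K ⊆ Set.Ici 0 ×ˢ (Set.univ : Set ℝ) →
      ∃ c > (0:ℝ), ∀ q ∈ K, c ≤ a (F q.1 q.2) := by
  intro K hK hKs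
  obtain ⟨P, hPc, -, -, hPF⟩ := hFmem
  have hF01 : ∀ t, 0 ≤ t → ∀ x, F t x ∈ Icc (0:ℝ) 1 := by
    intro t ht x
    rw [hPF t ht x]
    refine ⟨ENNReal.toReal_nonneg, ?_⟩
    exact measureReal_le_one
  rcases halt with ⟨c, hc, hca⟩ | ⟨hapos, hm0⟩
  · exact ⟨c, hc, fun q hq => hca _ (hF01 _ (hKs hq).1 _)⟩
  let Q : ℝ → ProbabilityMeasure ℝ := fun t => P (max t 0)
  have hQ : Continuous Q := by
    refine hPc.comp_continuous (by fun_prop) fun t => mem_Ici.2 (le_max_right _ _)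
  have hQP : ∀ t, 0 ≤ t → Q t = P t := fun t ht => by simp [Q, ht]
  let G : ℝ → ℝ → ℝ := fun t x => ((Q t : Measure ℝ) (Iic x)).toReal
  have hGF : ∀ t, 0 ≤ t → ∀ x, F t x = G t x := fun t ht x => by
    simp only [G]; rw [hQP t ht, hPF t ht x]
  obtain ⟨a', ha'c, ha'e, ha'v, ⟨L, hL, hAL⟩, hAe, -⟩ := ext_facts ha
  obtain ⟨b', hb'c, hb'e, hb'v, ⟨M, hM, hBM⟩, hBe, hBc⟩ := ext_facts hb
  have hAmono : Monotone (primitive a') := by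
    intro u v huv
    have : primitive a' v - primitive a' u = ∫ x in u..v, a' x :=
      intervalIntegral.integral_interval_sub_left (ha'c.intervalIntegrable _ _)
        (ha'c.intervalIntegrable _ _)
    have h2 : 0 ≤ ∫ x in u..v, a' x := intervalIntegral.integral_nonneg huv fun x _ => by
      obtain ⟨w, hw, e⟩ := ha'v x
      rw [e]; exact ha0 w hw
    linarith
  have hcdfmono : ∀ μ : Measure ℝ, IsProbabilityMeasure μ → Monotone (cdfOf μ) := by
    intro μ _ x y hxy
    exact ENNReal.toReal_mono (measure_ne_top _ _) (measure_mono (Iic_subset_Iic.2 hxy))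
  have hw : IsWeakSolution (primitive a') (primitive b') (cdfOf m) G := by
    intro g hg hgc t ht
    have h := hF g hg hgc t ht
    have e1 : ∀ x, g t x * F t x = g t x * G t x := fun x => by rw [hGF t ht]
    simp_rw [e1] at h
    rw [h]
    congr 1
    funext x
    refine intervalIntegral.integral_congr fun s hs => ?_
    rw [uIcc_of_le ht] at hs
    have h1 := hF01 s hs.1 x
    rw [← hGF s hs.1 x, hAe _ h1, hBe _ h1]
  have hpos : ∀ t, 0 ≤ t → ∀ z, 0 < G t z := fun t ht z =>
    sol_pos (F := G) hAmono hBc hL hM hAL hBM (usc_joint hQ).measurable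
      (fun s => hcdfmono _ inferInstance) (fun s x => ENNReal.toReal_nonneg)
      (fun s x => measureReal_le_one) (fun s => by
        refine (ProbabilityTheory.tendsto_cdf_atBot (Q s : Measure ℝ)).congr fun x => ?_
        rw [ProbabilityTheory.cdf_eq_real]; rfl) hw (hcdfmono m inferInstance) hm0
      (fun x => measureReal_le_one) z t ht
  rcases K.eq_empty_or_nonempty with rfl | hKne
  · exact ⟨1, one_pos, by simp⟩
  obtain ⟨R, hR⟩ := (hK.image continuous_snd).bddBelow
  have hlsc : LowerSemicontinuousOn (fun q : ℝ × ℝ => (Q q.1 : Measure ℝ) (Iio R)) K := by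
    intro q hq r hr
    have h1 := hr.trans_le (ProbabilityMeasure.le_liminf_measure_open_of_tendsto
      (hQ.tendsto q.1) (isOpen_Iio (a := R)))
    have h2 := eventually_lt_of_lt_liminf h1
    exact ((continuous_fst.tendsto q).eventually h2).filter_mono nhdsWithin_le_nhds
  obtain ⟨q₀, hq₀, hmin⟩ := hlsc.exists_isMinOn hKne hK
  set δ := ((Q q₀.1 : Measure ℝ) (Iio R)).toReal with hδ
  have hδpos : 0 < δ := by
    refine (hpos q₀.1 (hKs hq₀).1 (R - 1)).trans_le ?_
    refine ENNReal.toReal_mono (measure_ne_top _ _) (measure_mono fun x hx => ?_)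
    have : x ≤ R - 1 := hx
    show x < R
    linarith
  have hlow : ∀ q ∈ K, F q.1 q.2 ∈ Icc δ 1 := by
    intro q hq
    refine ⟨?_, (hF01 _ (hKs hq).1 _).2⟩
    rw [hGF _ (hKs hq).1]
    refine ENNReal.toReal_mono (measure_ne_top _ _) ((hmin hq).trans (measure_mono ?_))
    intro x hx
    exact (le_of_lt hx).trans (hR ⟨q, hq, rfl⟩)
  have hsub : Icc δ 1 ⊆ Icc (0:ℝ) 1 := Icc_subset_Icc_left hδpos.le
  obtain ⟨u, hu, humin⟩ := isCompact_Icc.exists_isMinOn ⟨_, hlow q₀ hq₀⟩ (ha.mono hsub)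
  exact ⟨a u, hapos u ⟨hδpos.trans_le hu.1, hu.2⟩, fun q hq => humin (hlow q hq)⟩
end
end

section
/- Assume condition (D1) (A is increasing on [0,1]). If F∞ is a cumulative distribution function on ℝ solving the stationary equation (1/2)∂²_x(A(F∞(x))) − ∂_x(B(F∞(x))) = 0 in the sense of distributions, then F∞ is continuous on ℝ, B(1) = 0, B(u) ≥ 0 for all u ∈ [0,1], and the function u ↦ a(u)/(2B(u)) (with the convention that it equals 0 when a(u) = B(u) = 0) is locally integrable on (0,1). -/
open MeasureTheory Set Filter Topology
open scoped ENNReal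

noncomputable section

/-- `F` is the cumulative distribution function of a probability measure on `ℝ`. -/
def IsCDF (F : ℝ → ℝ) : Prop :=
  Monotone F ∧ (∀ x : ℝ, ContinuousWithinAt F (Set.Ici x) x) ∧
    Tendsto F atBot (nhds 0) ∧ Tendsto F atTop (nhds 1)

/-- `F` solves the stationary equation `(1/2) ∂ₓₓ (A(F)) - ∂ₓ (B(F)) = 0` in the sense
of distributions. -/
def IsStationarySolution (A B : ℝ → ℝ) (F : ℝ → ℝ) : Prop :=
  ∀ φ : ℝ → ℝ, ContDiff ℝ (⊤ : ℕ∞) φ → HasCompactSupport φ →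
    (1/2) * (∫ x : ℝ, A (F x) * deriv (deriv φ) x) + (∫ x : ℝ, B (F x) * deriv φ x) = 0

/-- `Ψ(u) = ∫_{1/2}^u a(v) / (2 B(v)) dv`. -/
def Psi (a b : ℝ → ℝ) (u : ℝ) : ℝ := ∫ v in (1/2:ℝ)..u, a v / (2 * primitive b v)

/-- The inverse of `Ψ`, extended by `1` above `lim_{u→1} Ψ(u)` and by `0` below
`lim_{u→0} Ψ(u)` when these limits are finite. -/
def PsiInv (a b : ℝ → ℝ) (x : ℝ) : ℝ :=
  sSup {u : ℝ | u ∈ Set.Ioo (0:ℝ) 1 ∧ Psi a b u ≤ x}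

lemma exists_test_prim (ψ : ℝ → ℝ) (h1 : ContDiff ℝ (⊤ : ℕ∞) ψ) (h2 : HasCompactSupport ψ)
    (h3 : ∫ x, ψ x = 0) :
    ∃ φ : ℝ → ℝ, ContDiff ℝ (⊤ : ℕ∞) φ ∧ HasCompactSupport φ ∧ deriv φ = ψ := by
  obtain ⟨R, hR⟩ := h2.isCompact.isBounded.subset_ball 0
  have hR' : tsupport ψ ⊆ Ioo (-R) R := by simpa [Real.ball_eq_Ioo] using hR
  have hz : ∀ x, x ∉ Ioo (-R) R → ψ x = 0 := fun x hx =>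
    image_eq_zero_of_notMem_tsupport fun h => hx (hR' h)
  have hd : ∀ x, HasDerivAt (fun x => ∫ t in (-R)..x, ψ t) (ψ x) x := fun x =>
    h1.continuous.integral_hasStrictDerivAt (-R) x |>.hasDerivAt
  have hder : deriv (fun x => ∫ t in (-R)..x, ψ t) = ψ := funext fun x => (hd x).deriv
  refine ⟨fun x => ∫ t in (-R)..x, ψ t, ?_, ?_, hder⟩
  · rw [contDiff_infty_iff_deriv]
    exact ⟨fun x => (hd x).differentiableAt, by rw [hder]; exact h1⟩
  · refine HasCompactSupport.intro (K := Icc (-R) R) isCompact_Icc ?_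
    intro x hx
    by_cases hx1 : x < -R
    · show ∫ t in (-R)..x, ψ t = 0
      rw [intervalIntegral.integral_congr_ae (g := fun _ => (0:ℝ))]
      · simp
      · refine ae_of_all _ fun t ht => hz t ?_
        rw [uIoc_of_ge hx1.le] at ht
        exact fun h => absurd h.1 (not_lt.2 ht.2)
    · show ∫ t in (-R)..x, ψ t = 0
      rw [intervalIntegral.integral_eq_integral_of_support_subset, h3]
      intro t ht
      have h4 := hR' (subset_tsupport _ ht)
      refine ⟨h4.1, ?_⟩
      by_contra h5
      exact hx ⟨not_lt.1 hx1, by linarith [h4.2]⟩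

lemma test_const (L : (ℝ → ℝ) → ℝ)
    (hL : ∀ ψ ρ : ℝ → ℝ, ContDiff ℝ (⊤ : ℕ∞) ψ → HasCompactSupport ψ →
      ContDiff ℝ (⊤ : ℕ∞) ρ → HasCompactSupport ρ → ∀ c : ℝ,
      L (fun x => ψ x - c * ρ x) = L ψ - c * L ρ)
    (h0 : ∀ φ : ℝ → ℝ, ContDiff ℝ (⊤ : ℕ∞) φ → HasCompactSupport φ → L (deriv φ) = 0) :
    ∃ C : ℝ, ∀ ψ : ℝ → ℝ, ContDiff ℝ (⊤ : ℕ∞) ψ → HasCompactSupport ψ → L ψ = C * ∫ x, ψ x := by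
  let f : ContDiffBump (0:ℝ) := ⟨1, 2, by norm_num, by norm_num⟩
  set ρ : ℝ → ℝ := f.normed volume with hρ
  have r1 : ContDiff ℝ (⊤ : ℕ∞) ρ := f.contDiff_normed
  have r2 : HasCompactSupport ρ := f.hasCompactSupport_normed
  have r3 : ∫ x, ρ x = 1 := f.integral_normed
  refine ⟨L ρ, fun ψ p1 p2 => ?_⟩
  have ip : Integrable ψ := p1.continuous.integrable_of_hasCompactSupport p2
  have ir : Integrable ρ := r1.continuous.integrable_of_hasCompactSupport r2
  obtain ⟨φ, q1, q2, q3⟩ := exists_test_prim (fun x => ψ x - (∫ y, ψ y) * ρ x)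
    (p1.sub (contDiff_const.mul r1)) (p2.sub r2.mul_left)
    (by rw [integral_sub ip (ir.const_mul _), integral_const_mul, r3]; ring)
  have := h0 φ q1 q2
  rw [q3, hL ψ ρ p1 p2 r1 r2] at this
  linarith

lemma dist_solve (G H : ℝ → ℝ) (hG : LocallyIntegrable G) (hH : LocallyIntegrable H)
    (hGr : ∀ x, ContinuousWithinAt G (Ici x) x) (hHr : ∀ x, ContinuousWithinAt H (Ici x) x)
    (hsol : ∀ φ : ℝ → ℝ, ContDiff ℝ (⊤ : ℕ∞) φ → HasCompactSupport φ →
      (1/2) * (∫ x : ℝ, G x * deriv (deriv φ) x) + (∫ x : ℝ, H x * deriv φ x) = 0) :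
    ∃ C c : ℝ, ∀ x, G x = 2 * (c + ∫ t in (0:ℝ)..x, (H t - C)) := by
  have iG : ∀ ψ : ℝ → ℝ, Continuous ψ → HasCompactSupport ψ →
      Integrable (fun x => G x * ψ x) := fun ψ h1 h2 =>
    hG.integrable_smul_right_of_hasCompactSupport h1 h2
  have iH : ∀ ψ : ℝ → ℝ, Continuous ψ → HasCompactSupport ψ →
      Integrable (fun x => H x * ψ x) := fun ψ h1 h2 =>
    hH.integrable_smul_right_of_hasCompactSupport h1 h2
  have dcont : ∀ ψ : ℝ → ℝ, ContDiff ℝ (⊤ : ℕ∞) ψ → Continuous (deriv ψ) := fun ψ h =>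
    h.continuous_deriv (by simp)
  obtain ⟨C, hC⟩ := test_const
    (fun ψ => (1/2) * (∫ x : ℝ, G x * deriv ψ x) + (∫ x : ℝ, H x * ψ x)) (by
      intro ψ ρ p1 p2 r1 r2 c
      have e : ∀ x, deriv (fun x => ψ x - c * ρ x) x = deriv ψ x - c * deriv ρ x := fun x => by
        have hp : HasDerivAt ψ (deriv ψ x) x := (p1.differentiable (by simp) x).hasDerivAt
        have hr : HasDerivAt ρ (deriv ρ x) x := (r1.differentiable (by simp) x).hasDerivAt
        exact (hp.sub (hr.const_mul c)).deriv
      have e1 : ∫ x, G x * deriv (fun x => ψ x - c * ρ x) x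
          = (∫ x, G x * deriv ψ x) - c * ∫ x, G x * deriv ρ x := by
        rw [← integral_const_mul, ← integral_sub (iG _ (dcont _ p1) p2.deriv)
          ((iG _ (dcont _ r1) r2.deriv).const_mul c)]
        congr 1; ext x; rw [e]; ring
      have e2 : ∫ x, H x * (ψ x - c * ρ x) = (∫ x, H x * ψ x) - c * ∫ x, H x * ρ x := by
        rw [← integral_const_mul, ← integral_sub (iH _ p1.continuous p2)
          ((iH _ r1.continuous r2).const_mul c)]
        congr 1; ext x; ring
      simp only [e1, e2]; ring)
    (fun φ h1 h2 => hsol φ h1 h2)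
  set K : ℝ → ℝ := fun t => H t - C with hK
  have hKl : LocallyIntegrable K := hH.sub (locallyIntegrable_const C)
  have hKr : ∀ x, ContinuousWithinAt K (Ici x) x := fun x => (hHr x).sub continuousWithinAt_const
  have hKi : ∀ a b, IntervalIntegrable K volume a b := fun a b =>
    (hKl.integrableOn_isCompact isCompact_uIcc).intervalIntegrable
  set h : ℝ → ℝ := fun x => ∫ t in (0:ℝ)..x, K t with hh
  have hc : Continuous h := intervalIntegral.continuous_primitive hKi 0
  have hder : ∀ x, HasDerivWithinAt h (K x) (Ioi x) x := fun x =>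
    (intervalIntegral.integral_hasDerivWithinAt_right (hKi 0 x) (s := Ici x) (t := Ioi x)
      (hKl.aestronglyMeasurable.stronglyMeasurableAtFilter)
      ((hKr x).mono Ioi_subset_Ici_self)).mono Ioi_subset_Ici_self
  have parts : ∀ ψ : ℝ → ℝ, ContDiff ℝ (⊤ : ℕ∞) ψ → HasCompactSupport ψ →
      ∫ x, h x * deriv ψ x = - ∫ x, K x * ψ x := by
    intro ψ p1 p2
    obtain ⟨R, hR⟩ := p2.isCompact.isBounded.subset_ball 0
    have hR' : tsupport ψ ⊆ Ioo (-R) R := by simpa [Real.ball_eq_Ioo] using hR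
    have hz : ∀ x, x ∉ Ioo (-R) R → ψ x = 0 := fun x hx =>
      image_eq_zero_of_notMem_tsupport fun h => hx (hR' h)
    have hsub : Ioo (-R) R ⊆ Ioc (-R) R := Ioo_subset_Ioc_self
    have s1 : Function.support (fun x => h x * deriv ψ x) ⊆ Ioc (-R) R := fun x hx =>
      hsub (hR' (support_deriv_subset (fun h0 => hx (by simp [h0]))))
    have s2 : Function.support (fun x => K x * ψ x) ⊆ Ioc (-R) R := fun x hx =>
      hsub (hR' (subset_tsupport _ (fun h0 => hx (by simp [h0]))))
    rw [← intervalIntegral.integral_eq_integral_of_support_subset s1,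
      ← intervalIntegral.integral_eq_integral_of_support_subset s2,
      intervalIntegral.integral_mul_deriv_eq_deriv_mul_of_hasDeriv_right
        (u' := K) (v := ψ) hc.continuousOn p1.continuous.continuousOn
        (fun x _ => hder x)
        (fun x _ => ((p1.differentiable (by simp) x).hasDerivAt).hasDerivWithinAt)
        (hKi _ _) ((dcont _ p1).intervalIntegrable _ _),
      hz R (by simp), hz (-R) (by simp)]
    simp
  set w : ℝ → ℝ := fun x => G x - 2 * h x with hw
  have hwl : LocallyIntegrable w := hG.sub (hc.const_mul 2 |>.locallyIntegrable)
  have iw : ∀ ψ : ℝ → ℝ, Continuous ψ → HasCompactSupport ψ →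
      Integrable (fun x => w x * ψ x) := fun ψ h1 h2 =>
    hwl.integrable_smul_right_of_hasCompactSupport h1 h2
  obtain ⟨D, hD⟩ := test_const (fun ψ => ∫ x, w x * ψ x) (by
      intro ψ ρ p1 p2 r1 r2 c
      show ∫ x, w x * (ψ x - c * ρ x) = (∫ x, w x * ψ x) - c * ∫ x, w x * ρ x
      rw [← integral_const_mul, ← integral_sub (iw _ p1.continuous p2)
          ((iw _ r1.continuous r2).const_mul c)]
      congr 1; ext x; ring) (by
      intro φ p1 p2
      have i1 := iG _ (dcont _ p1) p2.deriv
      have i2 : Integrable (fun x => h x * deriv φ x) :=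
        hc.locallyIntegrable.integrable_smul_right_of_hasCompactSupport (dcont _ p1) p2.deriv
      have e1 : ∫ x, w x * deriv φ x = (∫ x, G x * deriv φ x) - 2 * ∫ x, h x * deriv φ x := by
        rw [← integral_const_mul, ← integral_sub i1 (i2.const_mul 2)]
        congr 1; ext x; simp only [hw]; ring
      have e2 : ∫ x, K x * φ x = (∫ x, H x * φ x) - C * ∫ x, φ x := by
        rw [← integral_const_mul, ← integral_sub (iH _ p1.continuous p2)
          ((p1.continuous.integrable_of_hasCompactSupport p2).const_mul C)]
        congr 1; ext x; simp only [hK]; ring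
      have := hC φ p1 p2
      rw [e1, parts φ p1 p2, e2]; linarith)
  have hae : ∀ᵐ x, w x - D = 0 := by
    apply ae_eq_zero_of_integral_contDiff_smul_eq_zero (hwl.sub (locallyIntegrable_const D))
    intro g g1 g2
    have := hD g g1 g2
    have e : ∫ x, g x • (w x - D) = (∫ x, w x * g x) - D * ∫ x, g x := by
      rw [← integral_const_mul, ← integral_sub (iw _ g1.continuous g2)
          ((g1.continuous.integrable_of_hasCompactSupport g2).const_mul D)]
      congr 1; ext x; simp only [smul_eq_mul]; ring
    exact e.trans (by linarith)
  have hall : ∀ x, w x = D := by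
    intro x
    have hwr : Tendsto w (𝓝[>] x) (𝓝 (w x)) :=
      (((hGr x).sub ((hc.const_mul 2).continuousWithinAt)).mono Ioi_subset_Ici_self)
    have hfr : ∃ᶠ y in 𝓝[>] x, w y = D := by
      rw [(nhdsGT_basis x).frequently_iff]
      intro y hy
      by_contra hcon
      push Not at hcon
      have : volume (Ioo x y) = 0 := by
        refine measure_mono_null ?_ hae
        intro z hz hz0
        exact hcon z hz (by have : w z - D = 0 := hz0
                            linarith)
      simp at this
      have : x < y := hy
      linarith
    have : w x ∈ closure ({D} : Set ℝ) :=
      mem_closure_of_frequently_of_tendsto hfr hwr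
    simpa using this
  refine ⟨C, D / 2, fun x => ?_⟩
  have := hall x
  simp only [hw] at this
  show G x = 2 * (D / 2 + h x)
  linarith

lemma deriv_lim_zero_top (g g' : ℝ → ℝ) (hg : ∀ x, HasDerivAt g (g' x) x) (l L : ℝ)
    (h1 : Tendsto g atTop (𝓝 l)) (h2 : Tendsto g' atTop (𝓝 L)) : L = 0 := by
  have hm : ∀ x : ℝ, ∃ c, x ≤ c ∧ g' c = g (x + 1) - g x := by
    intro x
    obtain ⟨c, hc, e⟩ := exists_hasDerivAt_eq_slope g g' (by linarith : x < x + 1)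
      (fun y _ => (hg y).continuousAt.continuousWithinAt) (fun y _ => hg y)
    exact ⟨c, hc.1.le, by rw [e]; simp⟩
  choose c hc e using hm
  have t1 : Tendsto (fun x => g' (c x)) atTop (𝓝 L) :=
    h2.comp (tendsto_atTop_mono hc tendsto_id)
  have t2 : Tendsto (fun x => g' (c x)) atTop (𝓝 (l - l)) := by
    simp_rw [e]
    exact (h1.comp (tendsto_atTop_add_const_right _ 1 tendsto_id)).sub h1
  simpa using tendsto_nhds_unique t1 t2

lemma deriv_lim_zero_bot (g g' : ℝ → ℝ) (hg : ∀ x, HasDerivAt g (g' x) x) (l L : ℝ)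
    (h1 : Tendsto g atBot (𝓝 l)) (h2 : Tendsto g' atBot (𝓝 L)) : L = 0 := by
  have := deriv_lim_zero_top (fun x => g (-x)) (fun x => g' (-x) * (-1))
    (fun x => (hg (-x)).comp x (hasDerivAt_neg x)) l (L * (-1))
    (h1.comp tendsto_neg_atTop_atBot) ((h2.comp tendsto_neg_atTop_atBot).mul_const _)
  linarith

lemma primitive_hasDerivAt {a : ℝ → ℝ} (ha : Continuous a) (x : ℝ) :
    HasDerivAt (primitive a) (a x) x :=
  (ha.integral_hasStrictDerivAt 0 x).hasDerivAt

lemma primitive_cont {a : ℝ → ℝ} (ha : Continuous a) : Continuous (primitive a) :=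
  continuous_iff_continuousAt.2 fun x => (primitive_hasDerivAt ha x).continuousAt

lemma eps_bound (a β F : ℝ → ℝ) (ha : Continuous a) (hβ : Continuous β)
    (ha0 : ∀ u ∈ Icc (0:ℝ) 1, 0 ≤ a u) (hβ0 : ∀ u ∈ Icc (0:ℝ) 1, 0 ≤ β u)
    (hFm : Monotone F) (hFc : Continuous F) (hF01 : ∀ x, F x ∈ Icc (0:ℝ) 1)
    (hder : ∀ x, HasDerivAt (fun x => primitive a (F x)) (2 * β (F x)) x)
    (ε : ℝ) (hε : 0 < ε) (x0 x1 : ℝ) (hx : x0 ≤ x1) :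
    ∫ u in (F x0)..(F x1), a u / (2 * |β u| + ε) ≤ x1 - x0 := by
  have hpos : ∀ u, 0 < 2 * |β u| + ε := fun u => by positivity
  have hgc : Continuous (fun u => a u / (2 * |β u| + ε)) :=
    ha.div (by fun_prop) (fun u => (hpos u).ne')
  set g : ℝ → ℝ := fun u => a u / (2 * |β u| + ε) with hg
  have hgi : ∀ p q, IntervalIntegrable g volume p q := fun p q => hgc.intervalIntegrable p q
  have key := image_le_of_liminf_slope_right_le_deriv_boundary
    (f := fun x => ∫ u in (F x0)..(F x), g u) (a := x0) (b := x1)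
    (B := fun x => x - x0) (B' := fun _ => 1)
    ((intervalIntegral.continuous_primitive hgi (F x0)).comp hFc).continuousOn
    (by simp) (by fun_prop)
    (fun x _ => ((hasDerivAt_id x).sub_const x0).hasDerivWithinAt) ?_
  · exact key ⟨hx, le_rfl⟩
  intro x _ r hr
  apply Eventually.frequently
  set m := 2 * β (F x) with hm
  have hm0 : 0 ≤ m := by have := hβ0 _ (hF01 x); positivity
  have hnear : ∀ᶠ y in 𝓝 x, |2 * β (F y) - m| < ε / 2 := by
    have : ContinuousAt (fun y => |2 * β (F y) - m|) x := by fun_prop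
    refine this.eventually_lt continuousAt_const ?_
    simp [hm, hε]
  obtain ⟨δ, hδ, hball⟩ := Metric.eventually_nhds_iff.1 hnear
  have hIoo : Ioo x (x + δ) ∈ 𝓝[>] x := Ioo_mem_nhdsGT (by linarith)
  filter_upwards [hIoo] with z hz
  have hloc : ∀ y ∈ Icc x z, |2 * β (F y) - m| < ε / 2 := fun y hy => hball (by
    rw [Real.dist_eq, abs_lt]; constructor <;> linarith [hy.1, hy.2, hz.2])
  refine lt_of_le_of_lt ?_ hr
  rw [slope_def_field, div_le_one (by linarith [hz.1]), 
    intervalIntegral.integral_interval_sub_left (hgi _ _) (hgi _ _)]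
  have hA : primitive a (F z) - primitive a (F x) ≤ (m + ε / 2) * (z - x) := by
    refine (convex_Icc x z).image_sub_le_mul_sub_of_deriv_le (f := fun x => primitive a (F x))
      (fun y _ => (hder y).continuousAt.continuousWithinAt)
      (fun y _ => (hder y).differentiableAt.differentiableWithinAt) ?_ x ⟨le_rfl, hz.1.le⟩
      z ⟨hz.1.le, le_rfl⟩ hz.1.le
    intro y hy
    rw [(hder y).deriv]
    have := (abs_lt.1 (hloc y (interior_subset hy))).2
    linarith
  have hA' : primitive a (F z) - primitive a (F x) = ∫ u in (F x)..(F z), a u :=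
    intervalIntegral.integral_interval_sub_left (ha.intervalIntegrable _ _)
      (ha.intervalIntegrable _ _)
  have hFle : F x ≤ F z := hFm hz.1.le
  have hmp : 0 < m + ε / 2 := by positivity
  calc ∫ u in (F x)..(F z), g u ≤ ∫ u in (F x)..(F z), a u / (m + ε / 2) := by
        refine intervalIntegral.integral_mono_on hFle (hgi _ _)
          ((ha.div_const _).intervalIntegrable _ _) ?_
        intro u hu
        obtain ⟨y, hy, rfl⟩ := intermediate_value_Icc hz.1.le hFc.continuousOn hu
        have h1 := (abs_lt.1 (hloc y hy)).1
        refine div_le_div_of_nonneg_left (ha0 _ (hF01 y)) hmp ?_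
        linarith [le_abs_self (β (F y))]
    _ = (primitive a (F z) - primitive a (F x)) / (m + ε / 2) := by
        rw [intervalIntegral.integral_div, hA']
    _ ≤ z - x := by
        rw [div_le_iff₀ hmp]; linarith

lemma core (a b : ℝ → ℝ) (ha : Continuous a) (hb : Continuous b)
    (ha0 : ∀ u ∈ Set.Icc (0:ℝ) 1, 0 ≤ a u)
    (hD1 : StrictMonoOn (primitive a) (Set.Icc 0 1))
    (F : ℝ → ℝ) (hF : IsCDF F)
    (hsol : IsStationarySolution (primitive a) (primitive b) F) :
    Continuous F ∧
    primitive b 1 = 0 ∧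
    (∀ u ∈ Set.Icc (0:ℝ) 1, 0 ≤ primitive b u) ∧
    (∀ c d : ℝ, 0 < c → c ≤ d → d < 1 →
      (∫⁻ u in Set.Icc c d,
        ENNReal.ofReal (a u) / ENNReal.ofReal (2 * primitive b u)) < ⊤) := by
  obtain ⟨hFm, hFr, hF0, hF1⟩ := hF
  have hF01 : ∀ x, F x ∈ Icc (0:ℝ) 1 := fun x =>
    ⟨hFm.le_of_tendsto hF0 x, hFm.ge_of_tendsto hF1 x⟩
  have hAc := primitive_cont ha
  have hBc := primitive_cont hb
  have hloc : ∀ f : ℝ → ℝ, Continuous f → LocallyIntegrable (fun x => f (F x)) := by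
    intro f hf
    obtain ⟨M, hM⟩ := isCompact_Icc.exists_bound_of_continuousOn (s := Icc (0:ℝ) 1) hf.continuousOn
    have hmeas : Measurable (fun x => f (F x)) := hf.measurable.comp hFm.measurable
    refine (locallyIntegrable_const M).mono hmeas.aestronglyMeasurable (ae_of_all _ fun x => ?_)
    exact (hM _ (hF01 x)).trans (le_abs_self M)
  obtain ⟨C, c, hG⟩ := dist_solve (fun x => primitive a (F x)) (fun x => primitive b (F x))
    (hloc _ hAc) (hloc _ hBc)
    (fun x => hAc.continuousAt.comp_continuousWithinAt (hFr x))
    (fun x => hBc.continuousAt.comp_continuousWithinAt (hFr x)) hsol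
  have hGc : Continuous (fun x => primitive a (F x)) := by
    rw [show (fun x => primitive a (F x)) = _ from funext hG]
    refine continuous_const.mul (continuous_const.add
      (intervalIntegral.continuous_primitive (fun p q => ?_) 0))
    exact (((hloc _ hBc).sub (locallyIntegrable_const C)).integrableOn_isCompact
      isCompact_uIcc).intervalIntegrable
  have hFc : Continuous F := by
    let A' : Icc (0:ℝ) 1 → ℝ := fun u => primitive a u
    have hA' : IsClosedEmbedding A' := Continuous.isClosedEmbedding
      (hAc.comp continuous_subtype_val)
      (fun u v h => Subtype.ext (hD1.injOn u.2 v.2 h))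
    have : Continuous (fun x => (⟨F x, hF01 x⟩ : Icc (0:ℝ) 1)) :=
      hA'.isInducing.continuous_iff.2 hGc
    exact continuous_subtype_val.comp this
  have hHc : Continuous (fun x => primitive b (F x)) := hBc.comp hFc
  have hder : ∀ x, HasDerivAt (fun x => primitive a (F x)) (2 * (primitive b (F x) - C)) x := by
    intro x
    rw [show (fun x => primitive a (F x)) = _ from funext hG]
    exact (((hHc.sub continuous_const).integral_hasStrictDerivAt 0 x).hasDerivAt.const_add c
      ).const_mul 2
  have hB0 : primitive b 0 = 0 := by simp [primitive]
  have lim0 : ∀ f : ℝ → ℝ, Continuous f → Tendsto (fun x => f (F x)) atBot (𝓝 (f 0)) :=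
    fun f hf => (hf.tendsto 0).comp hF0
  have lim1 : ∀ f : ℝ → ℝ, Continuous f → Tendsto (fun x => f (F x)) atTop (𝓝 (f 1)) :=
    fun f hf => (hf.tendsto 1).comp hF1
  have hC : C = 0 := by
    have := deriv_lim_zero_bot _ _ hder _ _ (lim0 _ hAc)
      (((lim0 _ hBc).sub_const C).const_mul 2)
    rw [hB0] at this; linarith
  subst hC
  simp only [sub_zero] at hder
  have hB1 : primitive b 1 = 0 := by
    have := deriv_lim_zero_top _ _ hder _ _ (lim1 _ hAc) ((lim1 _ hBc).const_mul 2)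
    linarith
  have hGm : Monotone (fun x => primitive a (F x)) := fun x y h =>
    hD1.monotoneOn (hF01 x) (hF01 y) (hFm h)
  have hsurj : ∀ u ∈ Ioo (0:ℝ) 1, ∃ x, F x = u := by
    intro u hu
    obtain ⟨p, hp⟩ := (hF0.eventually_lt_const hu.1).exists
    obtain ⟨q, hq⟩ := (hF1.eventually_const_lt hu.2).exists
    exact mem_range_of_exists_le_of_exists_ge hFc ⟨p, hp.le⟩ ⟨q, hq.le⟩
  have hBn : ∀ u ∈ Set.Icc (0:ℝ) 1, 0 ≤ primitive b u := by
    intro u hu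
    rcases hu.1.eq_or_lt with h | h
    · rw [← h, hB0]
    rcases hu.2.eq_or_lt with h' | h'
    · rw [h', hB1]
    obtain ⟨x, rfl⟩ := hsurj u ⟨h, h'⟩
    have := hGm.deriv_nonneg (x := x)
    rw [(hder x).deriv] at this
    linarith
  refine ⟨hFc, hB1, hBn, ?_⟩
  intro c d hc hcd hd
  rcases hcd.eq_or_lt with rfl | hlt
  · simp
  obtain ⟨x0, h0⟩ := hsurj c ⟨hc, by linarith⟩
  obtain ⟨x1, h1⟩ := hsurj d ⟨by linarith, hd⟩
  have hx : x0 ≤ x1 := by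
    by_contra h
    have := hFm (not_le.1 h).le
    linarith
  have hsub : ∀ u ∈ Icc c d, u ∈ Icc (0:ℝ) 1 := fun u hu =>
    ⟨by linarith [hu.1], by linarith [hu.2]⟩
  let f : ℕ → ℝ → ℝ≥0∞ := fun n u =>
    ENNReal.ofReal (a u / (2 * |primitive b u| + 1 / ((n:ℝ) + 1)))
  have hfc : ∀ n : ℕ, Continuous (fun u => a u / (2 * |primitive b u| + 1 / ((n:ℝ) + 1))) :=
    fun n => ha.div (by fun_prop) (fun u => by positivity)
  have hfb : ∀ n, ∫⁻ u in Icc c d, f n u ≤ ENNReal.ofReal (x1 - x0) := by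
    intro n
    have := eps_bound a (primitive b) F ha hBc ha0 hBn hFm hFc hF01 hder (1 / ((n:ℝ) + 1))
      (by positivity) x0 x1 hx
    rw [h0, h1, intervalIntegral.integral_of_le hcd, ← integral_Icc_eq_integral_Ioc] at this
    rw [← ofReal_integral_eq_lintegral_ofReal]
    · exact ENNReal.ofReal_le_ofReal this
    · exact (hfc n).integrableOn_Icc
    · refine (ae_restrict_iff' measurableSet_Icc).2 (ae_of_all _ fun u hu => ?_)
      have := ha0 u (hsub u hu)
      show 0 ≤ a u / (2 * |primitive b u| + 1 / ((n:ℝ) + 1))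
      positivity
  have hlim : ∀ u ∈ Icc c d, Tendsto (fun n => f n u) atTop
      (𝓝 (ENNReal.ofReal (a u) / ENNReal.ofReal (2 * primitive b u))) := by
    intro u hu
    have e : (fun n => f n u) = fun n : ℕ => ENNReal.ofReal (a u) /
        ENNReal.ofReal (2 * |primitive b u| + 1 / ((n:ℝ) + 1)) := by
      ext n
      exact ENNReal.ofReal_div_of_pos (by positivity)
    rw [e]
    refine ENNReal.Tendsto.const_div ?_ (Or.inl ENNReal.ofReal_ne_top)
    refine ENNReal.tendsto_ofReal ?_
    rw [abs_of_nonneg (hBn u (hsub u hu))]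
    simpa using tendsto_one_div_add_atTop_nhds_zero_nat.const_add (2 * primitive b u)
  calc (∫⁻ u in Set.Icc c d, ENNReal.ofReal (a u) / ENNReal.ofReal (2 * primitive b u))
      = ∫⁻ u in Icc c d, liminf (fun n => f n u) atTop :=
        setLIntegral_congr_fun measurableSet_Icc fun u hu => (hlim u hu).liminf_eq.symm
    _ ≤ liminf (fun n => ∫⁻ u in Icc c d, f n u) atTop :=
        lintegral_liminf_le fun n => (hfc n).measurable.ennreal_ofReal
    _ ≤ liminf (fun _ : ℕ => ENNReal.ofReal (x1 - x0)) atTop :=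
        liminf_le_liminf (Eventually.of_forall hfb)
    _ = ENNReal.ofReal (x1 - x0) := by simp
    _ < ⊤ := ENNReal.ofReal_lt_top

lemma primitive_ext (a : ℝ → ℝ) {u : ℝ} (hu : u ∈ Icc (0:ℝ) 1) :
    primitive (IccExtend (zero_le_one' ℝ) ((Icc (0:ℝ) 1).domRestrict a)) u = primitive a u := by
  refine intervalIntegral.integral_congr fun v hv => ?_
  rw [uIcc_of_le hu.1] at hv
  simp [IccExtend_of_mem, show v ∈ Icc (0:ℝ) 1 from ⟨hv.1, hv.2.trans hu.2⟩]

/-- Necessary conditions for a cdf to solve the stationary equation: continuity,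
`B(1) = 0`, `B ≥ 0`, and local integrability of `a/(2B)` on `(0,1)` (with the
convention that `a/(2B) = 0` where `a = B = 0`, encoded by the `ℝ≥0∞`-valued
quotient for which `0/0 = 0` and `c/0 = ∞` for `c ≠ 0`). -/
theorem stationary_solution_necessary_conditions
    (a b : ℝ → ℝ)
    (ha : ContinuousOn a (Set.Icc 0 1)) (hb : ContinuousOn b (Set.Icc 0 1))
    (ha0 : ∀ u ∈ Set.Icc (0:ℝ) 1, 0 ≤ a u)
    (hD1 : StrictMonoOn (primitive a) (Set.Icc 0 1))
    (F : ℝ → ℝ) (hF : IsCDF F)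
    (hsol : IsStationarySolution (primitive a) (primitive b) F) :
    Continuous F ∧
    primitive b 1 = 0 ∧
    (∀ u ∈ Set.Icc (0:ℝ) 1, 0 ≤ primitive b u) ∧
    (∀ c d : ℝ, 0 < c → c ≤ d → d < 1 →
      (∫⁻ u in Set.Icc c d,
        ENNReal.ofReal (a u) / ENNReal.ofReal (2 * primitive b u)) < ⊤) := by
  set a' := IccExtend (zero_le_one' ℝ) ((Icc (0:ℝ) 1).domRestrict a) with hadef
  set b' := IccExtend (zero_le_one' ℝ) ((Icc (0:ℝ) 1).domRestrict b) with hbdef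
  have ha' : Continuous a' := (continuousOn_iff_continuous_domRestrict.1 ha).Icc_extend'
  have hb' : Continuous b' := (continuousOn_iff_continuous_domRestrict.1 hb).Icc_extend'
  have ea : ∀ u ∈ Icc (0:ℝ) 1, a' u = a u := fun u hu => by
    simp [hadef, IccExtend_of_mem, hu]
  have eA : ∀ u ∈ Icc (0:ℝ) 1, primitive a' u = primitive a u := fun u hu => primitive_ext a hu
  have eB : ∀ u ∈ Icc (0:ℝ) 1, primitive b' u = primitive b u := fun u hu => primitive_ext b hu
  have hF01 : ∀ x, F x ∈ Icc (0:ℝ) 1 := fun x =>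
    ⟨hF.1.le_of_tendsto hF.2.2.1 x, hF.1.ge_of_tendsto hF.2.2.2 x⟩
  obtain ⟨h1, h2, h3, h4⟩ := core a' b' ha' hb' (fun u hu => by rw [ea u hu]; exact ha0 u hu)
    (hD1.congr fun u hu => (eA u hu).symm) F hF (by
      intro φ p1 p2
      simp only [eA _ (hF01 _), eB _ (hF01 _)]
      exact hsol φ p1 p2)
  refine ⟨h1, by rw [← eB 1 (by simp)]; exact h2,
    fun u hu => by rw [← eB u hu]; exact h3 u hu, fun c d hc hcd hd => ?_⟩
  refine lt_of_eq_of_lt ?_ (h4 c d hc hcd hd)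
  refine setLIntegral_congr_fun measurableSet_Icc fun u hu => ?_
  have hu' : u ∈ Icc (0:ℝ) 1 := ⟨by linarith [hu.1], by linarith [hu.2]⟩
  simp only [ea u hu', eB u hu']
end
end

section
/- Assume condition (D1) (A is increasing on [0,1]), B(1) = 0, B(u) ≥ 0 for all u ∈ [0,1], and that u ↦ a(u)/(2B(u)) (with the convention that it equals 0 when a(u) = B(u) = 0) is locally integrable on (0,1). Define Ψ(u) := ∫_{1/2}^u a(v)/(2B(v)) dv for u ∈ (0,1); Ψ is continuous and increasing. Let Ψ^{-1} denote its inverse, extended by setting Ψ^{-1}(x) = 1 for x ≥ lim_{u→1} Ψ(u) when this limit is finite and Ψ^{-1}(x) = 0 for x ≤ lim_{u→0} Ψ(u) when this limit is finite. Then Ψ^{-1} is a cumulative distribution function on ℝ and solves the stationary equation (1/2)∂²_x(A(Ψ^{-1}(x))) − ∂_x(B(Ψ^{-1}(x))) = 0 in the sense of distributions. -/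
open MeasureTheory Set Filter Topology
open scoped ENNReal

noncomputable section

lemma prim_cont {f : ℝ → ℝ} (hf : ContinuousOn f (Set.Icc 0 1)) :
    ContinuousOn (primitive f) (Set.Icc 0 1) := by
  have h : IntegrableOn f (uIcc (0:ℝ) 1) := by
    rw [uIcc_of_le zero_le_one]; exact hf.integrableOn_Icc
  have := intervalIntegral.continuousOn_primitive_interval h
  rwa [uIcc_of_le zero_le_one] at this

lemma prim_sub {f : ℝ → ℝ} (hf : ContinuousOn f (Set.Icc 0 1)) {u v : ℝ}
    (hu : u ∈ Icc (0:ℝ) 1) (hv : v ∈ Icc (0:ℝ) 1) :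
    IntervalIntegrable f volume u v ∧
    primitive f v - primitive f u = ∫ t in u..v, f t := by
  have h : ∀ x ∈ Icc (0:ℝ) 1, ∀ y ∈ Icc (0:ℝ) 1, IntervalIntegrable f volume x y := by
    intro x hx y hy
    apply ContinuousOn.intervalIntegrable
    exact hf.mono (uIcc_subset_Icc hx hy)
  refine ⟨h u hu v hv, ?_⟩
  exact intervalIntegral.integral_interval_sub_left (h 0 (by simp) v hv) (h 0 (by simp) u hu)

lemma basic_facts (a b : ℝ → ℝ)
    (ha : ContinuousOn a (Set.Icc 0 1)) (hb : ContinuousOn b (Set.Icc 0 1))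
    (ha0 : ∀ u ∈ Set.Icc (0:ℝ) 1, 0 ≤ a u)
    (hB0 : ∀ u ∈ Set.Icc (0:ℝ) 1, 0 ≤ primitive b u)
    (hloc : ∀ c d : ℝ, 0 < c → c ≤ d → d < 1 →
      (∫⁻ u in Set.Icc c d,
        ENNReal.ofReal (a u) / ENNReal.ofReal (2 * primitive b u)) < ⊤)
    (c d : ℝ) (hc : 0 < c) (hcd : c ≤ d) (hd : d < 1) :
    IntegrableOn (fun v => a v / (2 * primitive b v)) (Icc c d) ∧
    ∀ᵐ t ∂(volume.restrict (Icc c d)),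
      a t = 2 * primitive b t * (a t / (2 * primitive b t)) := by
  have hsub : Icc c d ⊆ Icc (0:ℝ) 1 := Icc_subset_Icc hc.le hd.le
  have hB := prim_cont hb
  have ma : AEMeasurable a (volume.restrict (Icc c d)) :=
    (ha.mono hsub).aemeasurable measurableSet_Icc
  have mB : AEMeasurable (fun v => 2 * primitive b v) (volume.restrict (Icc c d)) :=
    ((hB.mono hsub).aemeasurable measurableSet_Icc).const_mul 2
  have hfin := hloc c d hc hcd hd
  have hae := ae_lt_top' (ma.ennreal_ofReal.div mB.ennreal_ofReal) hfin.ne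
  have hmem : ∀ᵐ t ∂(volume.restrict (Icc c d)), t ∈ Icc c d :=
    ae_restrict_mem measurableSet_Icc
  constructor
  · refine ⟨(ma.div mB).aestronglyMeasurable, ?_⟩
    rw [hasFiniteIntegral_iff_ofReal]
    · refine lt_of_le_of_lt (lintegral_mono_ae ?_) hfin
      filter_upwards [hmem] with t ht
      rcases (mul_nonneg zero_le_two (hB0 t (hsub ht))).eq_or_lt with h | h
      · simp [← h]
      · rw [ENNReal.ofReal_div_of_pos h]
    · filter_upwards [hmem] with t ht
      exact div_nonneg (ha0 t (hsub ht)) (mul_nonneg zero_le_two (hB0 t (hsub ht)))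
  · filter_upwards [hmem, hae] with t ht h
    by_cases h0 : primitive b t = 0
    · have : a t = 0 := by
        by_contra h1
        have h2 : 0 < a t := lt_of_le_of_ne (ha0 t (hsub ht)) (Ne.symm h1)
        change ENNReal.ofReal (a t) / ENNReal.ofReal (2 * primitive b t) < ⊤ at h
        rw [h0, mul_zero, ENNReal.ofReal_zero, ENNReal.div_zero (by simpa using h2)] at h
        exact lt_irrefl _ h
      simp [this]
    · field_simp

/-- Facts on an interval between two arbitrary points of `(0,1)`. -/
lemma basic_facts' (a b : ℝ → ℝ)
    (ha : ContinuousOn a (Set.Icc 0 1)) (hb : ContinuousOn b (Set.Icc 0 1))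
    (ha0 : ∀ u ∈ Set.Icc (0:ℝ) 1, 0 ≤ a u)
    (hB0 : ∀ u ∈ Set.Icc (0:ℝ) 1, 0 ≤ primitive b u)
    (hloc : ∀ c d : ℝ, 0 < c → c ≤ d → d < 1 →
      (∫⁻ u in Set.Icc c d,
        ENNReal.ofReal (a u) / ENNReal.ofReal (2 * primitive b u)) < ⊤)
    (u v : ℝ) (hu : u ∈ Ioo (0:ℝ) 1) (hv : v ∈ Ioo (0:ℝ) 1) :
    IntervalIntegrable (fun v => a v / (2 * primitive b v)) volume u v ∧
    (∀ᵐ t ∂(volume.restrict (uIoc u v)),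
      a t = 2 * primitive b t * (a t / (2 * primitive b t))) ∧
    Psi a b v - Psi a b u = ∫ t in u..v, a t / (2 * primitive b t) := by
  have key : ∀ u ∈ Ioo (0:ℝ) 1, ∀ v ∈ Ioo (0:ℝ) 1,
      IntervalIntegrable (fun v => a v / (2 * primitive b v)) volume u v := by
    intro u hu v hv
    have := (basic_facts a b ha hb ha0 hB0 hloc (min u v) (max u v)
      (lt_min hu.1 hv.1) min_le_max (max_lt hu.2 hv.2)).1
    exact IntegrableOn.intervalIntegrable this
  have half : (1/2:ℝ) ∈ Ioo (0:ℝ) 1 := by constructor <;> norm_num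
  refine ⟨key u hu v hv, ?_, ?_⟩
  · have := (basic_facts a b ha hb ha0 hB0 hloc (min u v) (max u v)
      (lt_min hu.1 hv.1) min_le_max (max_lt hu.2 hv.2)).2
    exact ae_restrict_of_ae_restrict_of_subset Ioc_subset_Icc_self this
  · exact intervalIntegral.integral_interval_sub_left (key _ half v hv) (key _ half u hu)

lemma psi_cont_mono (a b : ℝ → ℝ)
    (ha : ContinuousOn a (Set.Icc 0 1)) (hb : ContinuousOn b (Set.Icc 0 1))
    (ha0 : ∀ u ∈ Set.Icc (0:ℝ) 1, 0 ≤ a u)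
    (hD1 : StrictMonoOn (primitive a) (Set.Icc 0 1))
    (hB0 : ∀ u ∈ Set.Icc (0:ℝ) 1, 0 ≤ primitive b u)
    (hloc : ∀ c d : ℝ, 0 < c → c ≤ d → d < 1 →
      (∫⁻ u in Set.Icc c d,
        ENNReal.ofReal (a u) / ENNReal.ofReal (2 * primitive b u)) < ⊤) :
    ContinuousOn (Psi a b) (Set.Ioo 0 1) ∧ StrictMonoOn (Psi a b) (Set.Ioo 0 1) := by
  have key := basic_facts' a b ha hb ha0 hB0 hloc
  have half : (1/2:ℝ) ∈ Ioo (0:ℝ) 1 := by constructor <;> norm_num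
  constructor
  · intro x hx
    apply ContinuousAt.continuousWithinAt
    obtain ⟨c, hc0, hc⟩ : ∃ c, 0 < c ∧ c < min x (1/2) := exists_between (lt_min hx.1 half.1)
    obtain ⟨d, hd, hd1⟩ : ∃ d, max x (1/2) < d ∧ d < 1 := exists_between (max_lt hx.2 half.2)
    rw [lt_min_iff] at hc
    rw [max_lt_iff] at hd
    have hcd : c ≤ d := (hc.1.trans hd.1).le
    have h1 := (key c d ⟨hc0, by linarith⟩ ⟨by linarith, hd1⟩).1
    have h2 := intervalIntegral.continuousOn_primitive_interval' (a := 1/2) h1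
      (by rw [uIcc_of_le hcd]; exact ⟨hc.2.le, hd.2.le⟩)
    rw [uIcc_of_le hcd] at h2
    exact h2.continuousAt (Icc_mem_nhds hc.1 hd.1)
  · intro u hu v hv huv
    obtain ⟨h1, h2, h3⟩ := key u v hu hv
    rw [← sub_pos, h3]
    rw [uIoc_of_le huv.le] at h2
    have hnn : 0 ≤ᵐ[volume.restrict (Ioc u v)] fun t => a t / (2 * primitive b t) := by
      filter_upwards [ae_restrict_mem measurableSet_Ioc] with t ht
      have : t ∈ Icc (0:ℝ) 1 := ⟨(hu.1.trans ht.1).le, ht.2.trans hv.2.le⟩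
      exact div_nonneg (ha0 t this) (mul_nonneg zero_le_two (hB0 t this))
    have h0 : 0 ≤ ∫ t in u..v, a t / (2 * primitive b t) := by
      rw [intervalIntegral.integral_of_le huv.le]
      exact integral_nonneg_of_ae hnn
    refine lt_of_le_of_ne h0 fun h => ?_
    have hz := (intervalIntegral.integral_eq_zero_iff_of_le_of_nonneg_ae huv.le hnn h1).1 h.symm
    have ui := Ioo_subset_Icc_self hu
    have vi := Ioo_subset_Icc_self hv
    have hA := hD1 ui vi huv
    rw [← sub_pos, (prim_sub ha ui vi).2, intervalIntegral.integral_of_le huv.le,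
      integral_eq_zero_of_ae] at hA
    · exact lt_irrefl _ hA
    · filter_upwards [h2, hz] with t ht ht'
      rw [ht, ht']; simp

section inverse
variable {a b : ℝ → ℝ}

lemma inv_mem (x : ℝ) : PsiInv a b x ∈ Icc (0:ℝ) 1 := by
  constructor
  · exact Real.sSup_nonneg fun u hu => hu.1.1.le
  · exact Real.sSup_le (fun u hu => hu.1.2.le) zero_le_one

lemma le_inv_iff (hc : ContinuousOn (Psi a b) (Set.Ioo 0 1))
    (hm : StrictMonoOn (Psi a b) (Set.Ioo 0 1)) {u : ℝ} (hu : u ∈ Ioo (0:ℝ) 1) (x : ℝ) :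
    u ≤ PsiInv a b x ↔ Psi a b u ≤ x := by
  constructor
  · intro h
    by_contra! hx
    have h1 : ∀ᶠ w in 𝓝 u, x < Psi a b w ∧ w ∈ Ioo (0:ℝ) 1 :=
      ((hc.continuousAt (Ioo_mem_nhds hu.1 hu.2)).eventually_const_lt hx).and
        (Ioo_mem_nhds hu.1 hu.2)
    obtain ⟨w, ⟨hw1, hw2⟩, hwu⟩ := ((h1.filter_mono nhdsWithin_le_nhds).and
      (self_mem_nhdsWithin : Iio u ∈ 𝓝[<] u)).exists
    have : PsiInv a b x ≤ w := by
      refine Real.sSup_le (fun z hz => ?_) hw2.1.le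
      by_contra! hzw
      exact absurd (hm hw2 hz.1 hzw) (by linarith [hz.2])
    exact absurd hwu (not_lt.2 (h.trans this))
  · intro h
    exact le_csSup ⟨1, fun z hz => hz.1.2.le⟩ ⟨hu, h⟩

lemma lt_inv_iff (hc : ContinuousOn (Psi a b) (Set.Ioo 0 1))
    (hm : StrictMonoOn (Psi a b) (Set.Ioo 0 1)) {u : ℝ} (hu : u ∈ Ioo (0:ℝ) 1) (x : ℝ) :
    u < PsiInv a b x ↔ Psi a b u < x := by
  constructor
  · intro h
    obtain ⟨w, hw1, hw2⟩ := exists_between h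
    have hw : w ∈ Ioo (0:ℝ) 1 := ⟨hu.1.trans hw1, hw2.trans_le (inv_mem x).2⟩
    exact (hm hu hw hw1).trans_le ((le_inv_iff hc hm hw x).1 hw2.le)
  · intro hx
    have h1 : ∀ᶠ w in 𝓝 u, Psi a b w < x ∧ w ∈ Ioo (0:ℝ) 1 :=
      ((hc.continuousAt (Ioo_mem_nhds hu.1 hu.2)).eventually_lt_const hx).and
        (Ioo_mem_nhds hu.1 hu.2)
    obtain ⟨w, ⟨hw1, hw2⟩, hwu⟩ := ((h1.filter_mono nhdsWithin_le_nhds).and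
      (self_mem_nhdsWithin : Ioi u ∈ 𝓝[>] u)).exists
    exact lt_of_lt_of_le hwu ((le_inv_iff hc hm hw2 x).2 hw1.le)

lemma inv_mono : Monotone (PsiInv a b) := by
  intro x y hxy
  refine Real.sSup_le (fun z hz => ?_) (inv_mem y).1
  exact le_csSup ⟨1, fun z hz => hz.1.2.le⟩ ⟨hz.1, hz.2.trans hxy⟩

lemma inv_cont (hc : ContinuousOn (Psi a b) (Set.Ioo 0 1))
    (hm : StrictMonoOn (Psi a b) (Set.Ioo 0 1)) : Continuous (PsiInv a b) := by
  rw [continuous_iff_continuousAt]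
  intro x
  refine tendsto_order.2 ⟨fun c hcx => ?_, fun c hcx => ?_⟩
  · rcases lt_or_ge c 0 with h | h
    · exact Eventually.of_forall fun y => h.trans_le (inv_mem y).1
    · obtain ⟨w, hw1, hw2⟩ := exists_between hcx
      have hw : w ∈ Ioo (0:ℝ) 1 := ⟨h.trans_lt hw1, hw2.trans_le (inv_mem x).2⟩
      filter_upwards [lt_mem_nhds ((lt_inv_iff hc hm hw x).1 hw2)] with y hy
      exact hw1.trans ((lt_inv_iff hc hm hw y).2 hy)
  · rcases lt_or_ge 1 c with h | h
    · exact Eventually.of_forall fun y => (inv_mem y).2.trans_lt h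
    · obtain ⟨w, hw1, hw2⟩ := exists_between hcx
      have hw : w ∈ Ioo (0:ℝ) 1 := ⟨(inv_mem x).1.trans_lt hw1, hw2.trans_le h⟩
      have : x < Psi a b w := by
        by_contra! h'
        exact absurd ((le_inv_iff hc hm hw x).2 h') (not_le.2 hw1)
      filter_upwards [gt_mem_nhds this] with y hy
      refine lt_trans ?_ hw2
      by_contra! h'
      exact absurd ((le_inv_iff hc hm hw y).1 h') (not_le.2 hy)

lemma inv_cdf (hc : ContinuousOn (Psi a b) (Set.Ioo 0 1))
    (hm : StrictMonoOn (Psi a b) (Set.Ioo 0 1)) : IsCDF (PsiInv a b) := by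
  refine ⟨inv_mono, fun x => (inv_cont hc hm).continuousWithinAt, ?_, ?_⟩
  · refine tendsto_order.2 ⟨fun c h => Eventually.of_forall fun y => h.trans_le (inv_mem y).1,
      fun c h => ?_⟩
    obtain ⟨w, hw1, hw2⟩ := exists_between (lt_min h zero_lt_one)
    have hw : w ∈ Ioo (0:ℝ) 1 := ⟨hw1, hw2.trans_le (min_le_right _ _)⟩
    filter_upwards [eventually_lt_atBot (Psi a b w)] with y hy
    refine lt_trans ?_ (hw2.trans_le (min_le_left _ _))
    by_contra! h'
    exact absurd ((le_inv_iff hc hm hw y).1 h') (not_le.2 hy)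
  · refine tendsto_order.2 ⟨fun c h => ?_,
      fun c h => Eventually.of_forall fun y => (inv_mem y).2.trans_lt h⟩
    obtain ⟨w, hw1, hw2⟩ := exists_between (max_lt h zero_lt_one)
    have hw : w ∈ Ioo (0:ℝ) 1 := ⟨(le_max_right _ _).trans_lt hw1, hw2⟩
    filter_upwards [eventually_gt_atTop (Psi a b w)] with y hy
    exact ((le_max_left _ _).trans_lt hw1).trans ((lt_inv_iff hc hm hw y).2 hy)

lemma psi_inv (hc : ContinuousOn (Psi a b) (Set.Ioo 0 1))
    (hm : StrictMonoOn (Psi a b) (Set.Ioo 0 1)) {x : ℝ} (hx : PsiInv a b x ∈ Ioo (0:ℝ) 1) :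
    Psi a b (PsiInv a b x) = x := by
  apply le_antisymm ((le_inv_iff hc hm hx x).1 le_rfl)
  by_contra! h
  exact lt_irrefl _ ((lt_inv_iff hc hm hx x).2 h)

end inverse

lemma deriv_inner (a b : ℝ → ℝ)
    (ha : ContinuousOn a (Set.Icc 0 1)) (hb : ContinuousOn b (Set.Icc 0 1))
    (ha0 : ∀ u ∈ Set.Icc (0:ℝ) 1, 0 ≤ a u)
    (hD1 : StrictMonoOn (primitive a) (Set.Icc 0 1))
    (hB0 : ∀ u ∈ Set.Icc (0:ℝ) 1, 0 ≤ primitive b u)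
    (hloc : ∀ c d : ℝ, 0 < c → c ≤ d → d < 1 →
      (∫⁻ u in Set.Icc c d,
        ENNReal.ofReal (a u) / ENNReal.ofReal (2 * primitive b u)) < ⊤)
    {x : ℝ} (hx : PsiInv a b x ∈ Ioo (0:ℝ) 1) :
    HasDerivAt (fun y => primitive a (PsiInv a b y)) (2 * primitive b (PsiInv a b x)) x := by
  obtain ⟨hc, hm⟩ := psi_cont_mono a b ha hb ha0 hD1 hB0 hloc
  have key := basic_facts' a b ha hb ha0 hB0 hloc
  have hF := (inv_cont hc hm).continuousAt (x := x)
  rw [hasDerivAt_iff_isLittleO, Asymptotics.isLittleO_iff]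
  intro ε hε
  set u := PsiInv a b x with hu
  have hBc : ContinuousAt (primitive b) u :=
    (prim_cont hb).continuousAt (Icc_mem_nhds hx.1 hx.2)
  obtain ⟨δ, hδ, hball⟩ := Metric.continuousAt_iff.1 hBc (ε / 2) (by positivity)
  filter_upwards [hF (Metric.ball_mem_nhds u hδ), hF (Ioo_mem_nhds hx.1 hx.2)] with y hy1 hy2
  change PsiInv a b y ∈ Metric.ball u δ at hy1
  change PsiInv a b y ∈ Ioo (0:ℝ) 1 at hy2
  set v := PsiInv a b y with hv
  obtain ⟨h1, h2, h3⟩ := key u v hx hy2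
  rw [hu, psi_inv hc hm hx, hv, psi_inv hc hm hy2, ← hu, ← hv] at h3
  obtain ⟨ia, ea⟩ := prim_sub ha (Ioo_subset_Icc_self hx) (Ioo_subset_Icc_self hy2)
  rw [ea, h3, smul_eq_mul, ← intervalIntegral.integral_mul_const,
    ← intervalIntegral.integral_sub ia (h1.mul_const _)]
  have hb1 : ∀ᵐ t ∂volume.restrict (uIoc u v),
      ‖a t - a t / (2 * primitive b t) * (2 * primitive b u)‖
        ≤ ε * (a t / (2 * primitive b t)) := by
    filter_upwards [h2, ae_restrict_mem measurableSet_uIoc] with t ht hmem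
    have hm' : t ∈ uIcc u v := uIoc_subset_uIcc hmem
    have ht01 : t ∈ Icc (0:ℝ) 1 :=
      uIcc_subset_Icc (Ioo_subset_Icc_self hx) (Ioo_subset_Icc_self hy2) hm'
    have htd : dist t u < δ := by
      refine lt_of_le_of_lt ?_ (Metric.mem_ball.1 hy1)
      rw [Real.dist_eq, Real.dist_eq]
      exact abs_sub_left_of_mem_uIcc hm'
    have hd := hball htd
    have hg : 0 ≤ a t / (2 * primitive b t) :=
      div_nonneg (ha0 t ht01) (mul_nonneg zero_le_two (hB0 t ht01))
    have e : a t - a t / (2 * primitive b t) * (2 * primitive b u)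
        = 2 * (primitive b t - primitive b u) * (a t / (2 * primitive b t)) := by
      linear_combination ht
    rw [e, norm_mul, Real.norm_of_nonneg hg]
    refine mul_le_mul_of_nonneg_right ?_ hg
    rw [norm_mul, ← dist_eq_norm, Real.norm_of_nonneg zero_le_two]
    linarith
  refine (intervalIntegral.norm_integral_le_abs_of_norm_le hb1 (h1.const_mul ε)).trans ?_
  rw [intervalIntegral.integral_const_mul, abs_mul, abs_of_pos hε, Real.norm_eq_abs]

lemma stationary_of_deriv (G H : ℝ → ℝ) (hG : Continuous G) (hH : Continuous H)
    (s : Set ℝ) (hs : s.Countable) (hd : ∀ x, x ∉ s → HasDerivAt G (2 * H x) x)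
    (φ : ℝ → ℝ) (h1 : ContDiff ℝ (⊤ : ℕ∞) φ) (h2 : HasCompactSupport φ) :
    (1/2) * (∫ x : ℝ, G x * deriv (deriv φ) x) + (∫ x : ℝ, H x * deriv φ x) = 0 := by
  have d1 : ContDiff ℝ (⊤ : ℕ∞) (deriv φ) := (contDiff_infty_iff_deriv.1 h1).2
  have d2 : ContDiff ℝ (⊤ : ℕ∞) (deriv (deriv φ)) := (contDiff_infty_iff_deriv.1 d1).2
  have c1 : HasCompactSupport (deriv φ) := h2.deriv
  have c2 : HasCompactSupport (deriv (deriv φ)) := c1.deriv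
  have i1 : Integrable (fun x => G x * deriv (deriv φ) x) :=
    (hG.mul d2.continuous).integrable_of_hasCompactSupport c2.mul_left
  have i2 : Integrable (fun x => H x * deriv φ x) :=
    (hH.mul d1.continuous).integrable_of_hasCompactSupport c1.mul_left
  rw [← integral_const_mul, ← integral_add (i1.const_mul _) i2]
  obtain ⟨R, hR0, hR⟩ := h2.isCompact.isBounded.subset_ball_lt 0 0
  have z1 : ∀ x, x ∉ Ioo (-R) R → deriv φ x = 0 ∧ deriv (deriv φ) x = 0 := by
    intro x hx
    have hx' : x ∉ tsupport φ := fun h => hx (by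
      have := hR h
      rw [Real.ball_eq_Ioo] at this; simpa using this)
    have hs1 : tsupport (deriv φ) ⊆ tsupport φ := tsupport_deriv_subset
    have hs2 : tsupport (deriv (deriv φ)) ⊆ tsupport (deriv φ) := tsupport_deriv_subset
    exact ⟨image_eq_zero_of_notMem_tsupport fun h => hx' (hs1 h),
      image_eq_zero_of_notMem_tsupport fun h => hx' (hs1 (hs2 h))⟩
  rw [← intervalIntegral.integral_eq_integral_of_support_subset (a := -R) (b := R)]
  · rw [integral_eq_of_hasDerivAt_off_countable (fun x => 1/2 * (G x * deriv φ x)) _ hs]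
    · rw [(z1 R (by simp)).1, (z1 (-R) (by simp)).1]; simp
    · exact (continuous_const.mul (hG.mul d1.continuous)).continuousOn
    · intro x hx
      have := ((hd x hx.2).mul ((d1.differentiable (by simp)) x).hasDerivAt).const_mul (1/2)
      refine HasDerivAt.congr_deriv this ?_
      ring
    · exact ((i1.const_mul _).add i2).intervalIntegrable
  · intro x hx
    by_contra h
    have h' : x ∉ Ioo (-R) R := fun h'' => h (Ioo_subset_Ioc_self h'')
    apply hx
    simp [z1 x h']

/-- Sufficiency: under (D1), `B(1) = 0`, `B ≥ 0` and local integrability of `a/(2B)`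
on `(0,1)`, the function `Ψ` is continuous and increasing on `(0,1)`, and its
(suitably extended) inverse `Ψ⁻¹` is a cumulative distribution function solving the
stationary equation in the sense of distributions. -/
theorem psi_inverse_is_stationary_solution
    (a b : ℝ → ℝ)
    (ha : ContinuousOn a (Set.Icc 0 1)) (hb : ContinuousOn b (Set.Icc 0 1))
    (ha0 : ∀ u ∈ Set.Icc (0:ℝ) 1, 0 ≤ a u)
    (hD1 : StrictMonoOn (primitive a) (Set.Icc 0 1))
    (hB1 : primitive b 1 = 0)
    (hB0 : ∀ u ∈ Set.Icc (0:ℝ) 1, 0 ≤ primitive b u)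
    (hloc : ∀ c d : ℝ, 0 < c → c ≤ d → d < 1 →
      (∫⁻ u in Set.Icc c d,
        ENNReal.ofReal (a u) / ENNReal.ofReal (2 * primitive b u)) < ⊤) :
    ContinuousOn (Psi a b) (Set.Ioo 0 1) ∧
    StrictMonoOn (Psi a b) (Set.Ioo 0 1) ∧
    IsCDF (PsiInv a b) ∧
    IsStationarySolution (primitive a) (primitive b) (PsiInv a b) := by
  obtain ⟨hc, hm⟩ := psi_cont_mono a b ha hb ha0 hD1 hB0 hloc
  refine ⟨hc, hm, inv_cdf hc hm, ?_⟩
  have hF := inv_cont hc hm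
  intro φ h1 h2
  refine stationary_of_deriv (fun x => primitive a (PsiInv a b x))
    (fun x => primitive b (PsiInv a b x))
    ((prim_cont ha).comp_continuous hF inv_mem) ((prim_cont hb).comp_continuous hF inv_mem)
    ({x | PsiInv a b x = 0 ∧ ∀ y, x < y → PsiInv a b y ≠ 0} ∪
      {x | PsiInv a b x = 1 ∧ ∀ y, y < x → PsiInv a b y ≠ 1}) ?_ ?_ φ h1 h2
  · refine (Set.Subsingleton.countable ?_).union (Set.Subsingleton.countable ?_)
    · intro x hx y hy
      rcases lt_trichotomy x y with h | h | h
      · exact absurd hy.1 (hx.2 y h)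
      · exact h
      · exact absurd hx.1 (hy.2 x h)
    · intro x hx y hy
      rcases lt_trichotomy x y with h | h | h
      · exact absurd hx.1 (hy.2 x h)
      · exact h
      · exact absurd hy.1 (hx.2 y h)
  · intro x hx
    have hB00 : primitive b 0 = 0 := by simp [primitive]
    by_cases e0 : PsiInv a b x = 0
    · have : ∃ y, x < y ∧ PsiInv a b y = 0 := by
        by_contra! h
        exact hx (Or.inl ⟨e0, h⟩)
      obtain ⟨y, hxy, hy⟩ := this
      rw [e0, hB00, mul_zero]
      refine (hasDerivAt_const x (primitive a 0)).congr_of_eventuallyEq ?_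
      filter_upwards [gt_mem_nhds hxy] with z hz
      have : PsiInv a b z = 0 := le_antisymm (hy ▸ inv_mono hz.le) (inv_mem z).1
      rw [this]
    by_cases e1 : PsiInv a b x = 1
    · have : ∃ y, y < x ∧ PsiInv a b y = 1 := by
        by_contra! h
        exact hx (Or.inr ⟨e1, h⟩)
      obtain ⟨y, hxy, hy⟩ := this
      rw [e1, hB1, mul_zero]
      refine (hasDerivAt_const x (primitive a 1)).congr_of_eventuallyEq ?_
      filter_upwards [lt_mem_nhds hxy] with z hz
      have : PsiInv a b z = 1 := le_antisymm (inv_mem z).2 (hy ▸ inv_mono hz.le)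
      rw [this]
    exact deriv_inner a b ha hb ha0 hD1 hB0 hloc
      ⟨lt_of_le_of_ne (inv_mem x).1 (Ne.symm e0), lt_of_le_of_ne (inv_mem x).2 e1⟩
end
end

section
/- Assume condition (D1) (A is increasing on [0,1]) and the equilibrium condition (E1). Then the cumulative distribution functions solving the stationary equation (1/2)∂²_x(A(F∞(x))) − ∂_x(B(F∞(x))) = 0 in the sense of distributions have a finite first moment if and only if condition (E2) holds, i.e., if and only if ∫₀^{1/2} a(u)u/(2|B(u)|) du + ∫_{1/2}^1 a(u)(1−u)/(2|B(u)|) du < +∞. -/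
open MeasureTheory Set Filter Topology
open scoped ENNReal

noncomputable section

def IsTest (ψ : ℝ → ℝ) : Prop := ContDiff ℝ (⊤ : ℕ∞) ψ ∧ HasCompactSupport ψ

lemma IsTest.bound {ψ : ℝ → ℝ} (h : IsTest ψ) :
    ∃ R : ℝ, 0 < R ∧ ∀ x, R ≤ |x| → ψ x = 0 := by
  obtain ⟨R, hR, hsub⟩ := h.2.isCompact.isBounded.subset_ball_lt 0 0
  refine ⟨R, hR, fun x hx => ?_⟩
  by_contra hne
  have := hsub (subset_tsupport _ (Function.mem_support.2 hne))
  simp only [Metric.mem_ball, dist_zero_right, Real.norm_eq_abs] at this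
  linarith

lemma IsTest.deriv' {ψ : ℝ → ℝ} (h : IsTest ψ) : IsTest (deriv ψ) :=
  ⟨(contDiff_infty_iff_deriv.1 h.1).2, h.2.deriv⟩

lemma IsTest.hasDerivAt {ψ : ℝ → ℝ} (h : IsTest ψ) (x : ℝ) : HasDerivAt ψ (deriv ψ x) x :=
  ((contDiff_infty_iff_deriv.1 h.1).1 x).hasDerivAt

lemma IsTest.integrable {ψ : ℝ → ℝ} (h : IsTest ψ) : Integrable ψ :=
  h.1.continuous.integrable_of_hasCompactSupport h.2

lemma IsTest.integrable_mul {ψ f : ℝ → ℝ} (h : IsTest ψ) (hf : LocallyIntegrable f) :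
    Integrable (fun x => f x * ψ x) := by
  simpa [mul_comm] using hf.integrable_smul_left_of_hasCompactSupport h.1.continuous h.2

lemma IsTest.sub_smul {ψ η : ℝ → ℝ} (h : IsTest ψ) (h' : IsTest η) (c : ℝ) :
    IsTest (fun x => ψ x - c * η x) := by
  refine ⟨h.1.sub (contDiff_const.mul h'.1), ?_⟩
  obtain ⟨R, hR, h1⟩ := h.bound
  obtain ⟨R', hR', h2⟩ := h'.bound
  refine HasCompactSupport.intro (isCompact_closedBall (0:ℝ) (max R R')) fun x hx => ?_
  simp only [Metric.mem_closedBall, dist_zero_right, Real.norm_eq_abs, not_le, max_lt_iff] at hx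
  rw [h1 x hx.1.le, h2 x hx.2.le]; simp

lemma exists_test : ∃ η : ℝ → ℝ, IsTest η ∧ ∫ x, η x = 1 := by
  let f : ContDiffBump (0:ℝ) := ⟨1, 2, one_pos, one_lt_two⟩
  exact ⟨f.normed volume, ⟨f.contDiff_normed, f.hasCompactSupport_normed⟩, f.integral_normed⟩

lemma IsTest.antideriv {ψ : ℝ → ℝ} (h : IsTest ψ) (h0 : ∫ x, ψ x = 0) :
    ∃ φ, IsTest φ ∧ deriv φ = ψ := by
  obtain ⟨R, hR, hb⟩ := h.bound
  have hc := h.1.continuous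
  have hd : ∀ x, HasDerivAt (fun u => ∫ t in (-R)..u, ψ t) (ψ x) x := fun x =>
    intervalIntegral.integral_hasDerivAt_right (hc.intervalIntegrable _ _)
      (hc.stronglyMeasurableAtFilter _ _) hc.continuousAt
  have hder : deriv (fun u => ∫ t in (-R)..u, ψ t) = ψ := funext fun x => (hd x).deriv
  refine ⟨_, ⟨contDiff_infty_iff_deriv.2 ⟨fun x => (hd x).differentiableAt, ?_⟩, ?_⟩, hder⟩
  · rw [hder]; exact h.1
  · refine HasCompactSupport.intro (isCompact_closedBall (0:ℝ) R) fun x hx => ?_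
    simp only [Metric.mem_closedBall, dist_zero_right, Real.norm_eq_abs, not_le] at hx
    rcases lt_abs.1 hx with hx | hx
    · rw [← h0]
      apply intervalIntegral.integral_eq_integral_of_support_subset
      intro t ht
      by_contra hn
      apply ht
      apply hb
      simp only [mem_Ioc, not_and_or, not_lt, not_le] at hn
      rcases hn with hn | hn
      · rw [abs_of_neg (by linarith)]; linarith
      · rw [abs_of_pos (by linarith)]; linarith
    · rw [intervalIntegral.integral_congr (g := fun _ => (0:ℝ))]
      · simp
      · intro t ht
        rw [uIcc_of_ge (by linarith)] at ht
        apply hb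
        rw [abs_of_neg (by linarith [ht.2])]; linarith [ht.2]

lemma duBoisReymond {f : ℝ → ℝ} (hf : LocallyIntegrable f)
    (h : ∀ ψ, IsTest ψ → ∫ x, f x * deriv ψ x = 0) : ∃ e : ℝ, ∀ᵐ x, f x = e := by
  obtain ⟨η, hη, hη1⟩ := exists_test
  refine ⟨∫ x, f x * η x, ?_⟩
  have := ae_eq_zero_of_integral_contDiff_smul_eq_zero (μ := volume)
    (f := fun x => f x - ∫ x, f x * η x) (hf.sub (locallyIntegrable_const _)) ?_
  · filter_upwards [this] with x hx using sub_eq_zero.1 hx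
  intro g hg hgc
  have hgt : IsTest g := ⟨hg, hgc⟩
  have ht := hgt.sub_smul hη (∫ x, g x)
  obtain ⟨φ, hφ, hφ'⟩ := ht.antideriv (by
    rw [integral_sub hgt.integrable (hη.integrable.const_mul _), integral_const_mul, hη1]; simp)
  have h1 := h φ hφ
  rw [hφ'] at h1
  have e1 : ∀ x, f x * (g x - (∫ x, g x) * η x) = f x * g x - (∫ x, g x) * (f x * η x) :=
    fun x => by ring
  simp_rw [e1] at h1
  rw [integral_sub (hgt.integrable_mul hf) ((hη.integrable_mul hf).const_mul _),
    integral_const_mul] at h1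
  have e2 : ∀ x, g x • (f x - ∫ x, f x * η x) = f x * g x - (∫ x, f x * η x) * g x :=
    fun x => by simp only [smul_eq_mul]; ring
  simp_rw [e2]
  rw [integral_sub (hgt.integrable_mul hf) (hgt.integrable.const_mul _), integral_const_mul]
  linarith

/-- integration by parts against a test function, for right-continuous `h`. -/
lemma parts_right {h ψ : ℝ → ℝ} (hh : LocallyIntegrable h)
    (hr : ∀ x, ContinuousWithinAt h (Ici x) x) (hψ : IsTest ψ) :
    ∫ x, (∫ t in (0:ℝ)..x, h t) * deriv ψ x = - ∫ x, h x * ψ x := by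
  have hi : ∀ a b, IntervalIntegrable h volume a b := fun a b => (hh.integrableOn_isCompact isCompact_uIcc).intervalIntegrable
  obtain ⟨R, hR, hb⟩ := hψ.bound
  obtain ⟨R', hR', hb'⟩ := hψ.deriv'.bound
  set M := max R R' + 1
  have hM : R < M := by have := le_max_left R R'; simp only [M]; linarith
  have hM' : R' < M := by have := le_max_right R R'; simp only [M]; linarith
  have key : ∀ x, x ∉ Ioc (-M) M → M ≤ |x| := by
    intro x hn
    simp only [mem_Ioc, not_and_or, not_lt, not_le] at hn
    rcases hn with hn | hn
    · rw [abs_of_neg (by linarith)]; linarith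
    · rw [abs_of_pos (by linarith)]; linarith
  have hcP : Continuous (fun x => ∫ t in (0:ℝ)..x, h t) :=
    intervalIntegral.continuous_primitive hi 0
  have := intervalIntegral.integral_mul_deriv_eq_deriv_mul_of_hasDeriv_right
    (a := -M) (b := M) (u := fun x => ∫ t in (0:ℝ)..x, h t) (u' := h) (v := ψ) (v' := deriv ψ)
    hcP.continuousOn hψ.1.continuous.continuousOn
    (fun x _ => ((intervalIntegral.integral_hasDerivWithinAt_right (s := Ici x) (t := Ioi x)
      (hi 0 x) (hh.aestronglyMeasurable.stronglyMeasurableAtFilter) ((hr x).mono Ioi_subset_Ici_self)).mono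
        Ioi_subset_Ici_self))
    (fun x _ => (hψ.hasDerivAt x).hasDerivWithinAt) (hi _ _)
    (hψ.deriv'.1.continuous.intervalIntegrable _ _)
  rw [intervalIntegral.integral_eq_integral_of_support_subset
      (f := fun x => (∫ t in (0:ℝ)..x, h t) * deriv ψ x),
    intervalIntegral.integral_eq_integral_of_support_subset (f := fun x => h x * ψ x)] at this
  · rw [this, hb M (hM.le.trans (le_abs_self _)), hb (-M) (by rw [abs_neg]; exact hM.le.trans (le_abs_self _))]
    simp
  · intro x hx
    by_contra hn
    exact hx (by simp [hb x (hM.le.trans (key x hn))])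
  · intro x hx
    by_contra hn
    exact hx (by simp [hb' x (hM'.le.trans (key x hn))])

lemma weak_to_integral {G h : ℝ → ℝ} (hG : LocallyIntegrable G) (hh : LocallyIntegrable h)
    (hGr : ∀ x, ContinuousWithinAt G (Ici x) x) (hhr : ∀ x, ContinuousWithinAt h (Ici x) x)
    (hG0 : Tendsto G atBot (𝓝 0)) (hh0 : Tendsto h atBot (𝓝 0))
    (hw : ∀ φ, IsTest φ → (1/2) * (∫ x, G x * deriv (deriv φ) x) + ∫ x, h x * deriv φ x = 0) :
    ∀ x y, G y - G x = 2 * ∫ t in x..y, h t := by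
  obtain ⟨η, hη, hη1⟩ := exists_test
  set k := (1/2) * (∫ x, G x * deriv η x) + ∫ x, h x * η x with hk
  -- all test functions
  have h1 : ∀ ψ, IsTest ψ →
      (1/2) * (∫ x, G x * deriv ψ x) + ∫ x, h x * ψ x = k * ∫ x, ψ x := by
    intro ψ hψ
    have ht := hψ.sub_smul hη (∫ x, ψ x)
    obtain ⟨φ, hφ, hφ'⟩ := ht.antideriv (by
      rw [integral_sub hψ.integrable (hη.integrable.const_mul _), integral_const_mul, hη1]; simp)
    have := hw φ hφ
    rw [hφ'] at this
    have ed : ∀ x, deriv (fun x => ψ x - (∫ x, ψ x) * η x) x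
        = deriv ψ x - (∫ x, ψ x) * deriv η x := fun x =>
      ((hψ.hasDerivAt x).sub ((hη.hasDerivAt x).const_mul _)).deriv
    simp_rw [ed] at this
    have e1 : ∀ x, G x * (deriv ψ x - (∫ x, ψ x) * deriv η x)
      = G x * deriv ψ x - (∫ x, ψ x) * (G x * deriv η x) := fun x => by ring
    have e2 : ∀ x, h x * (ψ x - (∫ x, ψ x) * η x)
      = h x * ψ x - (∫ x, ψ x) * (h x * η x) := fun x => by ring
    simp_rw [e1, e2] at this
    rw [integral_sub (hψ.deriv'.integrable_mul hG) ((hη.deriv'.integrable_mul hG).const_mul _),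
      integral_sub (hψ.integrable_mul hh) ((hη.integrable_mul hh).const_mul _),
      integral_const_mul, integral_const_mul] at this
    rw [hk]; linarith
  have hhk : LocallyIntegrable (fun x => h x - k) := hh.sub (locallyIntegrable_const _)
  have hhkr : ∀ x, ContinuousWithinAt (fun x => h x - k) (Ici x) x := fun x =>
    (hhr x).sub continuousWithinAt_const
  have hik : ∀ a b, IntervalIntegrable (fun x => h x - k) volume a b :=
    fun a b => (hhk.integrableOn_isCompact isCompact_uIcc).intervalIntegrable
  have hcP : Continuous (fun x => ∫ t in (0:ℝ)..x, (h t - k)) :=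
    intervalIntegral.continuous_primitive hik 0
  obtain ⟨e, he⟩ := duBoisReymond (f := fun x => (1/2) * G x - ∫ t in (0:ℝ)..x, (h t - k))
    ((hG.smul (1/2 : ℝ)).sub hcP.locallyIntegrable) (by
      intro ψ hψ
      have e1 : ∀ x, ((1/2) * G x - ∫ t in (0:ℝ)..x, (h t - k)) * deriv ψ x
        = (1/2) * (G x * deriv ψ x) - (∫ t in (0:ℝ)..x, (h t - k)) * deriv ψ x := fun x => by ring
      simp_rw [e1]
      rw [integral_sub ((hψ.deriv'.integrable_mul hG).const_mul _)
        (hψ.deriv'.integrable_mul hcP.locallyIntegrable), integral_const_mul,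
        parts_right hhk hhkr hψ]
      have e2 : ∀ x, (h x - k) * ψ x = h x * ψ x - k * ψ x := fun x => by ring
      simp_rw [e2]
      rw [integral_sub (hψ.integrable_mul hh) (hψ.integrable.const_mul _), integral_const_mul]
      linarith [h1 ψ hψ])
  have hev : ∀ x, (1/2) * G x - (∫ t in (0:ℝ)..x, (h t - k)) = e := by
    intro x
    have hc : Tendsto (fun x => (1/2) * G x - ∫ t in (0:ℝ)..x, (h t - k)) (𝓝[>] x)
        (𝓝 ((1/2) * G x - ∫ t in (0:ℝ)..x, (h t - k))) :=
      (((hGr x).mono Ioi_subset_Ici_self).const_smul (1/2:ℝ)).sub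
        hcP.continuousAt.continuousWithinAt
    have hfr : ∃ᶠ z in 𝓝[>] x, ((1/2) * G z - ∫ t in (0:ℝ)..z, (h t - k)) = e := by
      have hne : (ae (volume.restrict (Ioi x)) ⊓ 𝓝 x).NeBot := by
        rw [← frequently_true_iff_neBot, Filter.frequently_iff]
        intro U hU
        rw [Filter.mem_inf_iff] at hU
        obtain ⟨s, hs, t, ht, rfl⟩ := hU
        obtain ⟨ε, hε, hball⟩ := Metric.mem_nhds_iff.1 ht
        by_contra hcon
        push Not at hcon
        have hdis : Ioo x (x+ε) ⊆ sᶜ := by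
          intro z hz hzs
          refine hcon z ⟨hzs, hball ?_⟩
          rw [Metric.mem_ball, Real.dist_eq, abs_of_pos (by linarith [hz.1])]
          linarith [hz.2]
        have h0 : volume.restrict (Ioi x) (Ioo x (x+ε)) = 0 :=
          measure_mono_null hdis (mem_ae_iff.1 hs)
        rw [Measure.restrict_apply measurableSet_Ioo,
          inter_eq_left.2 Ioo_subset_Ioi_self, Real.volume_Ioo] at h0
        simp at h0; linarith
      have hle : ae (volume.restrict (Ioi x)) ⊓ 𝓝 x ≤ 𝓝[>] x :=
        le_inf inf_le_right (inf_le_left.trans (le_principal_iff.2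
          (ae_restrict_mem measurableSet_Ioi)))
      refine Frequently.filter_mono ?_ hle
      apply Eventually.frequently
      exact Eventually.filter_mono inf_le_left (ae_restrict_of_ae he)
    by_contra hne
    exact hfr (hc.eventually_ne hne)
  have hih : ∀ a b, IntervalIntegrable h volume a b := fun a b => (hh.integrableOn_isCompact isCompact_uIcc).intervalIntegrable
  have hdiff : ∀ x y, G y - G x = 2 * ((∫ t in x..y, h t) - k * (y - x)) := by
    intro x y
    have e1 := hev x
    have e2 := hev y
    have := intervalIntegral.integral_interval_sub_left (hik 0 y) (hik 0 x)
    rw [intervalIntegral.integral_sub (hih x y) intervalIntegrable_const,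
      intervalIntegral.integral_const, smul_eq_mul] at this
    linarith
  have hk0 : k = 0 := by
    have t1 : Tendsto (fun x => G (x+1) - G x) atBot (𝓝 (0 - 0)) :=
      (hG0.comp (tendsto_atBot_add_const_right _ _ tendsto_id)).sub hG0
    have t2 : Tendsto (fun x => ∫ t in x..(x+1), h t) atBot (𝓝 0) := by
      rw [Metric.tendsto_nhds]
      intro ε hε
      have := (Metric.tendsto_nhds.1 hh0) (ε/2) (by linarith)
      obtain ⟨N, hN⟩ := eventually_atBot.1 this
      filter_upwards [eventually_le_atBot (N-1)] with x hx
      rw [dist_zero_right]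
      have := intervalIntegral.norm_integral_le_of_norm_le_const (a := x) (b := x+1) (f := h)
        (C := ε/2) (by
          intro t ht
          rw [uIoc_of_le (by linarith)] at ht
          have := hN t (by linarith [ht.2])
          rw [dist_zero_right] at this
          exact this.le)
      simp at this
      rw [Real.norm_eq_abs]
      linarith
    have t3 : Tendsto (fun x => G (x+1) - G x) atBot (𝓝 (2 * (0 - k * 1))) := by
      have : (fun x => G (x+1) - G x) = fun x => 2 * ((∫ t in x..(x+1), h t) - k * 1) := by
        funext x; rw [hdiff]; ring_nf
      rw [this]
      exact (t2.sub_const _).const_mul _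
    have := tendsto_nhds_unique t1 t3
    linarith
  intro x y
  rw [hdiff, hk0]; ring

lemma intble_of_mem {α : ℝ → ℝ} (hα : ContinuousOn α (Ioo 0 1)) {u v : ℝ}
    (hu : u ∈ Ioo (0:ℝ) 1) (hv : v ∈ Ioo (0:ℝ) 1) : IntervalIntegrable α volume u v :=
  (hα.mono (ordConnected_Ioo.uIcc_subset hu hv)).intervalIntegrable

lemma deriv_transfer {α κ p q F : ℝ → ℝ} {x d : ℝ}
    (hα : ContinuousOn α (Ioo 0 1)) (hκ : ContinuousOn κ (Ioo 0 1))
    (hα0 : ∀ u ∈ Ioo (0:ℝ) 1, 0 ≤ α u)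
    (hp : ∀ u ∈ Ioo (0:ℝ) 1, ∀ v ∈ Ioo (0:ℝ) 1, p v - p u = ∫ s in u..v, α s)
    (hq : ∀ u ∈ Ioo (0:ℝ) 1, ∀ v ∈ Ioo (0:ℝ) 1, q v - q u = ∫ s in u..v, α s * κ s)
    (hF : ContinuousAt F x) (hFx : F x ∈ Ioo (0:ℝ) 1)
    (hd : HasDerivAt (fun y => p (F y)) d x) :
    HasDerivAt (fun y => q (F y)) (κ (F x) * d) x := by
  have hpO : (fun y => p (F y) - p (F x)) =O[𝓝 x] fun y => y - x := hd.differentiableAt.isBigO_sub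
  rw [hasDerivAt_iff_isLittleO] at hd ⊢
  have h1 : (fun y => (q (F y) - q (F x)) - κ (F x) * (p (F y) - p (F x)))
      =o[𝓝 x] fun y => p (F y) - p (F x) := by
    rw [Asymptotics.isLittleO_iff]
    intro ε hε
    have hκc : ContinuousAt κ (F x) := hκ.continuousAt (isOpen_Ioo.mem_nhds hFx)
    have hnear : ∀ᶠ s in 𝓝 (F x), s ∈ Ioo (0:ℝ) 1 ∧ dist (κ s) (κ (F x)) < ε :=
      (isOpen_Ioo.eventually_mem hFx).and
        (Metric.tendsto_nhds.1 hκc ε hε)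
    obtain ⟨δ, hδ, hball⟩ := Metric.eventually_nhds_iff_ball.1 hnear
    filter_upwards [hF (Metric.ball_mem_nhds _ hδ)] with y hy
    have hyI := (hball _ hy).1
    have hyI' : F y ∈ Ioo (0:ℝ) 1 := hyI
    rw [hp _ hFx _ hyI', hq _ hFx _ hyI', ← intervalIntegral.integral_const_mul,
      ← intervalIntegral.integral_sub (f := fun s => α s * κ s) (intble_of_mem (hα.mul hκ) hFx hyI')
        ((intble_of_mem hα hFx hyI').const_mul _)]
    have := intervalIntegral.norm_integral_le_abs_of_norm_le (μ := volume) (a := F x) (b := F y)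
      (f := fun s => α s * κ s - κ (F x) * α s) (g := fun s => ε * α s) ?_
      ((intble_of_mem hα hFx hyI').const_mul _)
    · rw [intervalIntegral.integral_const_mul, abs_mul, abs_of_pos hε] at this
      exact this
    · rw [ae_restrict_iff' measurableSet_uIoc]
      refine Eventually.of_forall fun s hs => ?_
      have hsu : s ∈ uIcc (F x) (F y) := uIoc_subset_uIcc hs
      have hsb : s ∈ Metric.ball (F x) δ := by
        have : OrdConnected (Metric.ball (F x) δ) := (convex_ball (F x) δ).ordConnected
        exact this.uIcc_subset (Metric.mem_ball_self hδ) hy hsu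
      obtain ⟨hs1, hs2⟩ := hball s hsb
      have : α s * κ s - κ (F x) * α s = (κ s - κ (F x)) * α s := by ring
      rw [this, norm_mul, Real.norm_of_nonneg (hα0 s hs1)]
      exact mul_le_mul_of_nonneg_right hs2.le (hα0 s hs1)
  have h2 := h1.trans_isBigO hpO
  have h3 := hd.const_mul_left (κ (F x))
  refine (h2.add h3).congr_left fun y => ?_
  simp only [smul_eq_mul]; ring

lemma tonelli_right {w : ℝ → ℝ≥0∞} (hw : Measurable w) (c d : ℝ) :
    ∫⁻ u in Ioo c d, ∫⁻ v in Ioo c u, w v = ∫⁻ v in Ioo c d, w v * ENNReal.ofReal (d - v) := by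
  have e1 : ∀ u ∈ Ioo c d, ∫⁻ v in Ioo c u, w v
      = ∫⁻ v in Ioo c d, {p : ℝ × ℝ | p.2 < p.1}.indicator (fun p => w p.2) (u, v) := by
    intro u hu
    have : Ioo c u = Iio u ∩ Ioo c d := by
      ext v; simp only [mem_Ioo, mem_inter_iff, mem_Iio]
      exact ⟨fun h => ⟨h.2, h.1, h.2.trans hu.2⟩, fun h => ⟨h.2.1, h.1⟩⟩
    rw [this, ← Measure.restrict_restrict measurableSet_Iio, ← lintegral_indicator measurableSet_Iio]
    rfl
  rw [setLIntegral_congr_fun measurableSet_Ioo e1, lintegral_lintegral_swap]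
  · refine setLIntegral_congr_fun measurableSet_Ioo fun v hv => ?_
    have : ∀ u, {p : ℝ × ℝ | p.2 < p.1}.indicator (fun p => w p.2) (u, v)
        = (Ioi v).indicator (fun _ => w v) u := fun u => rfl
    simp_rw [this]
    rw [lintegral_indicator measurableSet_Ioi, lintegral_const,
      Measure.restrict_restrict measurableSet_Ioi, Measure.restrict_apply MeasurableSet.univ,
      univ_inter]
    have : Ioi v ∩ Ioo c d = Ioo v d := by
      ext u; simp only [mem_Ioo, mem_inter_iff, mem_Ioi]
      exact ⟨fun h => ⟨h.1, h.2.2⟩, fun h => ⟨h.1, hv.1.trans h.1, h.2⟩⟩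
    rw [this, Real.volume_Ioo]
  · exact ((hw.comp measurable_snd).indicator
      (measurableSet_lt measurable_snd measurable_fst)).aemeasurable

lemma tonelli_left {w : ℝ → ℝ≥0∞} (hw : Measurable w) (c d : ℝ) :
    ∫⁻ u in Ioo c d, ∫⁻ v in Ioo u d, w v = ∫⁻ v in Ioo c d, w v * ENNReal.ofReal (v - c) := by
  have e1 : ∀ u ∈ Ioo c d, ∫⁻ v in Ioo u d, w v
      = ∫⁻ v in Ioo c d, {p : ℝ × ℝ | p.1 < p.2}.indicator (fun p => w p.2) (u, v) := by
    intro u hu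
    have : Ioo u d = Ioi u ∩ Ioo c d := by
      ext v; simp only [mem_Ioo, mem_inter_iff, mem_Ioi]
      exact ⟨fun h => ⟨h.1, hu.1.trans h.1, h.2⟩, fun h => ⟨h.1, h.2.2⟩⟩
    rw [this, ← Measure.restrict_restrict measurableSet_Ioi, ← lintegral_indicator measurableSet_Ioi]
    rfl
  rw [setLIntegral_congr_fun measurableSet_Ioo e1, lintegral_lintegral_swap]
  · refine setLIntegral_congr_fun measurableSet_Ioo fun v hv => ?_
    have : ∀ u, {p : ℝ × ℝ | p.1 < p.2}.indicator (fun p => w p.2) (u, v)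
        = (Iio v).indicator (fun _ => w v) u := fun u => rfl
    simp_rw [this]
    rw [lintegral_indicator measurableSet_Iio, lintegral_const,
      Measure.restrict_restrict measurableSet_Iio, Measure.restrict_apply MeasurableSet.univ,
      univ_inter]
    have : Iio v ∩ Ioo c d = Ioo c v := by
      ext u; simp only [mem_Ioo, mem_inter_iff, mem_Iio]
      exact ⟨fun h => ⟨h.2.1, h.1⟩, fun h => ⟨h.2, h.1, h.2.trans hv.2⟩⟩
    rw [this, Real.volume_Ioo]
  · exact ((hw.comp measurable_snd).indicator
      (measurableSet_lt measurable_fst measurable_snd)).aemeasurable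

lemma ofReal_intervalIntegral {g : ℝ → ℝ} (hg : ContinuousOn g (Ioo 0 1))
    (hg0 : ∀ u ∈ Ioo (0:ℝ) 1, 0 ≤ g u) {u v : ℝ} (hu : u ∈ Ioo (0:ℝ) 1) (hv : v ∈ Ioo (0:ℝ) 1)
    (huv : u ≤ v) :
    ENNReal.ofReal (∫ s in u..v, g s)
      = ∫⁻ s in Ioo u v, (Ioo (0:ℝ) 1).indicator (fun s => ENNReal.ofReal (g s)) s := by
  have hi := intble_of_mem hg hu hv
  have hsub : Ioc u v ⊆ Ioo (0:ℝ) 1 := fun s hs => ⟨hu.1.trans hs.1, hs.2.trans_lt hv.2⟩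
  rw [intervalIntegral.integral_of_le huv, ofReal_integral_eq_lintegral_ofReal hi.1,
    setLIntegral_congr Ioo_ae_eq_Ioc]
  · refine setLIntegral_congr_fun measurableSet_Ioc fun s hs => ?_
    rw [indicator_of_mem (hsub hs)]
  · rw [EventuallyLE, ae_restrict_iff' measurableSet_Ioc]
    exact Eventually.of_forall fun s hs => hg0 s (hsub hs)

lemma moment_eq {g : ℝ → ℝ} (hg : ContinuousOn g (Ioo 0 1))
    (hg0 : ∀ u ∈ Ioo (0:ℝ) 1, 0 ≤ g u) :
    ∫⁻ u in Ioo (0:ℝ) 1, ENNReal.ofReal |∫ s in (1/2:ℝ)..u, g s|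
      = (∫⁻ u in Ioo (0:ℝ) (1/2), ENNReal.ofReal (g u * u))
        + ∫⁻ u in Ioo (1/2:ℝ) 1, ENNReal.ofReal (g u * (1 - u)) := by
  have hhalf : (1/2:ℝ) ∈ Ioo (0:ℝ) 1 := by constructor <;> norm_num
  set w := (Ioo (0:ℝ) 1).indicator (fun s => ENNReal.ofReal (g s)) with hwdef
  have hw : Measurable w := by
    have : Measurable ((Ioo (0:ℝ) 1).indicator g) := by
      classical
      rw [← piecewise_eq_indicator]
      exact hg.measurable_piecewise continuousOn_const measurableSet_Ioo
    have h2 : w = fun s => ENNReal.ofReal ((Ioo (0:ℝ) 1).indicator g s) := by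
      funext s
      by_cases hs : s ∈ Ioo (0:ℝ) 1
      · simp [hwdef, indicator_of_mem hs]
      · simp [hwdef, indicator_of_notMem hs]
    rw [h2]; exact this.ennreal_ofReal
  have hsplit : Ioo (0:ℝ) 1 = Ioo 0 (1/2) ∪ Ico (1/2) 1 := by
    rw [Ioo_union_Ico_eq_Ioo] <;> norm_num
  have hdisj : Disjoint (Ioo (0:ℝ) (1/2)) (Ico (1/2) 1) := by
    rw [Set.disjoint_left]; intro x hx hx'; linarith [hx.2, hx'.1]
  conv_lhs => rw [hsplit]
  rw [lintegral_union measurableSet_Ico hdisj, setLIntegral_congr (s := Ico (1/2:ℝ) 1)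
    Ioo_ae_eq_Ico.symm]
  congr 1
  · have e1 : ∀ u ∈ Ioo (0:ℝ) (1/2), ENNReal.ofReal |∫ s in (1/2:ℝ)..u, g s|
        = ∫⁻ s in Ioo u (1/2), w s := by
      intro u hu
      have huI : u ∈ Ioo (0:ℝ) 1 := ⟨hu.1, by linarith [hu.2]⟩
      rw [← ofReal_intervalIntegral hg hg0 huI hhalf hu.2.le, intervalIntegral.integral_symm,
        abs_neg, abs_of_nonneg]
      exact intervalIntegral.integral_nonneg hu.2.le fun s hs =>
        hg0 s ⟨huI.1.trans_le hs.1, hs.2.trans_lt hhalf.2⟩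
    rw [setLIntegral_congr_fun measurableSet_Ioo e1, tonelli_left hw]
    refine setLIntegral_congr_fun measurableSet_Ioo fun u hu => ?_
    have huI : u ∈ Ioo (0:ℝ) 1 := ⟨hu.1, by linarith [hu.2]⟩
    simp only [hwdef, indicator_of_mem huI, sub_zero]
    rw [ENNReal.ofReal_mul (hg0 u huI)]
  · have e1 : ∀ u ∈ Ioo (1/2:ℝ) 1, ENNReal.ofReal |∫ s in (1/2:ℝ)..u, g s|
        = ∫⁻ s in Ioo (1/2) u, w s := by
      intro u hu
      have huI : u ∈ Ioo (0:ℝ) 1 := ⟨by linarith [hu.1], hu.2⟩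
      rw [← ofReal_intervalIntegral hg hg0 hhalf huI hu.1.le, abs_of_nonneg]
      exact intervalIntegral.integral_nonneg hu.1.le fun s hs =>
        hg0 s ⟨hhalf.1.trans_le hs.1, hs.2.trans_lt huI.2⟩
    rw [setLIntegral_congr_fun measurableSet_Ioo e1, tonelli_right hw]
    refine setLIntegral_congr_fun measurableSet_Ioo fun u hu => ?_
    have huI : u ∈ Ioo (0:ℝ) 1 := ⟨by linarith [hu.1], hu.2⟩
    simp only [hwdef, indicator_of_mem huI]
    rw [ENNReal.ofReal_mul (hg0 u huI)]

/-- Order-theoretic inverse. -/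
lemma inverse_props {P : ℝ → ℝ} (hP : StrictMonoOn P (Ioo 0 1)) (hPc : ContinuousOn P (Ioo 0 1)) :
    ∃ F : ℝ → ℝ, IsCDF F ∧ Continuous F ∧ (∀ x, F x ∈ Icc (0:ℝ) 1) ∧
      (∀ x, F x ∈ Ioo (0:ℝ) 1 → P (F x) = x) ∧ (∀ u ∈ Ioo (0:ℝ) 1, pinv F u = P u) := by
  let S : ℝ → Set ℝ := fun x => {u : ℝ | u ∈ Ioo (0:ℝ) 1 ∧ P u ≤ x}
  let F : ℝ → ℝ := fun x => sSup (S x)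
  have hbdd : ∀ x, BddAbove (S x) := fun x => ⟨1, fun u hu => hu.1.2.le⟩
  have hF0 : ∀ x, 0 ≤ F x := fun x => Real.sSup_nonneg fun u hu => hu.1.1.le
  have hF1 : ∀ x, F x ≤ 1 := fun x => Real.sSup_le (fun u hu => hu.1.2.le) zero_le_one
  have hge : ∀ u ∈ Ioo (0:ℝ) 1, ∀ x, P u ≤ x → u ≤ F x := fun u hu x hx =>
    le_csSup (hbdd x) ⟨hu, hx⟩
  have hle : ∀ u ∈ Ioo (0:ℝ) 1, ∀ x, x ≤ P u → F x ≤ u := fun u hu x hx =>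
    Real.sSup_le (fun v hv => (hP.le_iff_le hv.1 hu).1 (hv.2.trans hx)) hu.1.le
  have hmono : Monotone F := fun x y hxy =>
    Real.sSup_le (fun u hu => hge u hu.1 y (hu.2.trans hxy)) (hF0 y)
  have hcont : Continuous F := by
    rw [continuous_iff_continuousAt]
    intro x
    refine tendsto_order.2 ⟨fun l hl => ?_, fun r hr => ?_⟩
    · by_cases hl0 : l < 0
      · exact Eventually.of_forall fun z => hl0.trans_le (hF0 z)
      push Not at hl0
      obtain ⟨u, hu1, hu2⟩ := exists_between hl
      have huI : u ∈ Ioo (0:ℝ) 1 := ⟨hl0.trans_lt hu1, hu2.trans_le (hF1 x)⟩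
      have hx : P u < x := by
        by_contra h; push Not at h
        exact absurd (hle u huI x h) (not_le.2 hu2)
      filter_upwards [lt_mem_nhds hx] with z hz
      exact hu1.trans_le (hge u huI z hz.le)
    · by_cases hr1 : 1 < r
      · exact Eventually.of_forall fun z => (hF1 z).trans_lt hr1
      push Not at hr1
      obtain ⟨u, hu1, hu2⟩ := exists_between hr
      have huI : u ∈ Ioo (0:ℝ) 1 := ⟨(hF0 x).trans_lt hu1, hu2.trans_le hr1⟩
      have hx : x < P u := by
        by_contra h; push Not at h
        exact absurd (hge u huI x h) (not_le.2 hu1)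
      filter_upwards [gt_mem_nhds hx] with z hz
      exact (hle u huI z hz.le).trans_lt hu2
  have hcP : ∀ u ∈ Ioo (0:ℝ) 1, ContinuousAt P u := fun u hu =>
    hPc.continuousAt (isOpen_Ioo.mem_nhds hu)
  -- points slightly to the right / left
  have hright : ∀ u ∈ Ioo (0:ℝ) 1, ∀ x, P u < x → u < F x := by
    intro u hu x hx
    have h1 : ∀ᶠ v in 𝓝 u, v ∈ Ioo (0:ℝ) 1 ∧ P v < x :=
      (isOpen_Ioo.eventually_mem hu).and
        ((hcP u hu).eventually (gt_mem_nhds hx))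
    obtain ⟨v, ⟨hv1, hv2⟩, hv3⟩ :=
      ((h1.filter_mono nhdsWithin_le_nhds).and (self_mem_nhdsWithin : Ioi u ∈ 𝓝[>] u)).exists
    exact lt_of_lt_of_le hv3 (hge v hv1 x hv2.le)
  have hleft : ∀ u ∈ Ioo (0:ℝ) 1, ∀ x, x < P u → F x < u := by
    intro u hu x hx
    have h1 : ∀ᶠ v in 𝓝 u, v ∈ Ioo (0:ℝ) 1 ∧ x < P v :=
      (isOpen_Ioo.eventually_mem hu).and
        ((hcP u hu).eventually (lt_mem_nhds hx))
    obtain ⟨v, ⟨hv1, hv2⟩, hv3⟩ :=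
      ((h1.filter_mono nhdsWithin_le_nhds).and (self_mem_nhdsWithin : Iio u ∈ 𝓝[<] u)).exists
    exact lt_of_le_of_lt (hle v hv1 x hv2.le) hv3
  refine ⟨F, ⟨hmono, fun x => hcont.continuousWithinAt, ?_, ?_⟩, hcont,
    fun x => ⟨hF0 x, hF1 x⟩, ?_, ?_⟩
  · refine tendsto_order.2 ⟨fun l hl => Eventually.of_forall fun z => hl.trans_le (hF0 z),
      fun r hr => ?_⟩
    obtain ⟨u, hu1, hu2⟩ := exists_between (lt_min hr zero_lt_one)
    filter_upwards [eventually_le_atBot (P u)] with z hz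
    exact (hle u ⟨hu1, hu2.trans_le (min_le_right _ _)⟩ z hz).trans_lt
      (hu2.trans_le (min_le_left _ _))
  · refine tendsto_order.2 ⟨fun l hl => ?_,
      fun r hr => Eventually.of_forall fun z => (hF1 z).trans_lt hr⟩
    obtain ⟨u, hu1, hu2⟩ := exists_between (max_lt hl zero_lt_one)
    filter_upwards [eventually_ge_atTop (P u)] with z hz
    exact ((le_max_left _ _).trans_lt hu1).trans_le
      (hge u ⟨(le_max_right _ _).trans_lt hu1, hu2⟩ z hz)
  · intro x hx
    rcases lt_trichotomy (P (F x)) x with h | h | h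
    · exact absurd (hright _ hx x h) (lt_irrefl _)
    · exact h
    · exact absurd (hleft _ hx x h) (lt_irrefl _)
  · intro u hu
    have : {x : ℝ | u < F x} = Ioi (P u) := by
      ext x
      refine ⟨fun h => ?_, fun h => hright u hu x h⟩
      by_contra hn
      exact absurd (hle u hu x (not_lt.1 hn)) (not_le.2 h)
    rw [pinv, this, csInf_Ioi]

lemma cdf_mem {F : ℝ → ℝ} (hF : IsCDF F) (x : ℝ) : F x ∈ Icc (0:ℝ) 1 :=
  ⟨hF.1.le_of_tendsto hF.2.2.1 x, hF.1.ge_of_tendsto hF.2.2.2 x⟩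

lemma exists_ext {A : ℝ → ℝ} (hA : ContinuousOn A (Icc 0 1)) :
    ∃ A' : ℝ → ℝ, Continuous A' ∧ (∀ u ∈ Icc (0:ℝ) 1, A' u = A u) ∧ ∃ C, ∀ u, ‖A' u‖ ≤ C := by
  have hmem : ∀ x : ℝ, max 0 (min 1 x) ∈ Icc (0:ℝ) 1 := fun x =>
    ⟨le_max_left _ _, max_le zero_le_one (min_le_left _ _)⟩
  refine ⟨fun x => A (max 0 (min 1 x)), hA.comp_continuous (by fun_prop) hmem, ?_, ?_⟩
  · intro u hu
    simp only [min_eq_right hu.2, max_eq_right hu.1]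
  · obtain ⟨C, hC⟩ := isCompact_Icc.exists_bound_of_continuousOn hA
    exact ⟨C, fun u => hC _ (hmem u)⟩

lemma prim_sub_s17 {a : ℝ → ℝ} (ha : ContinuousOn a (Icc 0 1)) :
    ∀ u ∈ Icc (0:ℝ) 1, ∀ v ∈ Icc (0:ℝ) 1, primitive a v - primitive a u = ∫ s in u..v, a s := by
  intro u hu v hv
  have h0 : (0:ℝ) ∈ Icc (0:ℝ) 1 := by simp
  have hi : ∀ u ∈ Icc (0:ℝ) 1, ∀ v ∈ Icc (0:ℝ) 1, IntervalIntegrable a volume u v :=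
    fun u hu v hv => (ha.mono (ordConnected_Icc.uIcc_subset hu hv)).intervalIntegrable
  exact intervalIntegral.integral_interval_sub_left (hi 0 h0 v hv) (hi 0 h0 u hu)

lemma prim_cont_s17 {a : ℝ → ℝ} (ha : ContinuousOn a (Icc 0 1)) :
    ContinuousOn (primitive a) (Icc 0 1) := by
  have := intervalIntegral.continuousOn_primitive_interval (μ := volume) (f := a) (a := 0) (b := 1)
    (by rw [uIcc_of_le zero_le_one]; exact ha.integrableOn_Icc)
  rwa [uIcc_of_le zero_le_one] at this

section setup

variable {a b : ℝ → ℝ}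

lemma g_cont (ha : ContinuousOn a (Set.Icc 0 1)) (hb : ContinuousOn b (Set.Icc 0 1))
    (hE1pos : ∀ u ∈ Set.Ioo (0:ℝ) 1, 0 < primitive b u) :
    ContinuousOn (fun u => a u / (2 * primitive b u)) (Ioo 0 1) :=
  (ha.mono Ioo_subset_Icc_self).div
    (continuousOn_const.mul ((prim_cont_s17 hb).mono Ioo_subset_Icc_self))
    fun u hu => (mul_pos two_pos (hE1pos u hu)).ne'

lemma g_nonneg (ha0 : ∀ u ∈ Set.Icc (0:ℝ) 1, 0 ≤ a u)
    (hE1pos : ∀ u ∈ Set.Ioo (0:ℝ) 1, 0 < primitive b u) :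
    ∀ u ∈ Ioo (0:ℝ) 1, 0 ≤ a u / (2 * primitive b u) := fun u hu =>
  div_nonneg (ha0 u (Ioo_subset_Icc_self hu)) (mul_pos two_pos (hE1pos u hu)).le

lemma psi_sub (ha : ContinuousOn a (Set.Icc 0 1)) (hb : ContinuousOn b (Set.Icc 0 1))
    (hE1pos : ∀ u ∈ Set.Ioo (0:ℝ) 1, 0 < primitive b u) :
    ∀ u ∈ Ioo (0:ℝ) 1, ∀ v ∈ Ioo (0:ℝ) 1,
      Psi a b v - Psi a b u = ∫ s in u..v, a s / (2 * primitive b s) := by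
  intro u hu v hv
  have hhalf : (1/2:ℝ) ∈ Ioo (0:ℝ) 1 := by constructor <;> norm_num
  have hg := g_cont ha hb hE1pos
  exact intervalIntegral.integral_interval_sub_left (intble_of_mem hg hhalf hv)
    (intble_of_mem hg hhalf hu)

lemma psi_cont (ha : ContinuousOn a (Set.Icc 0 1)) (hb : ContinuousOn b (Set.Icc 0 1))
    (hE1pos : ∀ u ∈ Set.Ioo (0:ℝ) 1, 0 < primitive b u) :
    ContinuousOn (Psi a b) (Ioo 0 1) := by
  intro u hu
  have hhalf : (1/2:ℝ) ∈ Ioo (0:ℝ) 1 := by constructor <;> norm_num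
  have hg := g_cont ha hb hE1pos
  have : HasDerivAt (Psi a b) (a u / (2 * primitive b u)) u :=
    intervalIntegral.integral_hasDerivAt_right (intble_of_mem hg hhalf hu)
      (hg.stronglyMeasurableAtFilter isOpen_Ioo u hu) (hg.continuousAt (isOpen_Ioo.mem_nhds hu))
  exact this.continuousAt.continuousWithinAt

lemma prim_sub' (ha : ContinuousOn a (Set.Icc 0 1))
    (hE1pos : ∀ u ∈ Set.Ioo (0:ℝ) 1, 0 < primitive b u) :
    ∀ u ∈ Ioo (0:ℝ) 1, ∀ v ∈ Ioo (0:ℝ) 1,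
      primitive a v - primitive a u
        = ∫ s in u..v, (a s / (2 * primitive b s)) * (2 * primitive b s) := by
  intro u hu v hv
  rw [prim_sub_s17 ha u (Ioo_subset_Icc_self hu) v (Ioo_subset_Icc_self hv)]
  refine intervalIntegral.integral_congr fun s hs => ?_
  have hs' := ordConnected_Ioo.uIcc_subset hu hv hs
  exact (div_mul_cancel₀ _ (mul_pos two_pos (hE1pos s hs')).ne').symm

lemma psi_strict (ha : ContinuousOn a (Set.Icc 0 1)) (hb : ContinuousOn b (Set.Icc 0 1))
    (ha0 : ∀ u ∈ Set.Icc (0:ℝ) 1, 0 ≤ a u)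
    (hD1 : StrictMonoOn (primitive a) (Set.Icc 0 1))
    (hE1pos : ∀ u ∈ Set.Ioo (0:ℝ) 1, 0 < primitive b u) :
    StrictMonoOn (Psi a b) (Ioo 0 1) := by
  intro u hu v hv huv
  have h1 := hD1 (Ioo_subset_Icc_self hu) (Ioo_subset_Icc_self hv) huv
  have h2 := psi_sub ha hb hE1pos u hu v hv
  have h3 := prim_sub' (b := b) ha hE1pos u hu v hv
  have hg := g_cont ha hb hE1pos
  obtain ⟨C, hC⟩ := isCompact_Icc.exists_bound_of_continuousOn (prim_cont_s17 hb)
  have hle : primitive a v - primitive a u ≤ (2 * C) * (Psi a b v - Psi a b u) := by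
    rw [h2, h3, ← intervalIntegral.integral_const_mul]
    refine intervalIntegral.integral_mono_on huv.le
      (intble_of_mem (hg.mul (continuousOn_const.mul
        ((prim_cont_s17 hb).mono Ioo_subset_Icc_self))) hu hv)
      ((intble_of_mem hg hu hv).const_mul _) fun s hs => ?_
    have hs' : s ∈ Ioo (0:ℝ) 1 := ⟨hu.1.trans_le hs.1, hs.2.trans_lt hv.2⟩
    have := g_nonneg ha0 hE1pos s hs'
    rw [mul_comm]
    refine mul_le_mul_of_nonneg_right ?_ this
    linarith [(le_abs_self _).trans (hC s (Ioo_subset_Icc_self hs'))]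
  have hCpos : 0 ≤ C := (norm_nonneg _).trans (hC 0 (by simp))
  by_contra hn
  push Not at hn
  have : (2 * C) * (Psi a b v - Psi a b u) ≤ 0 :=
    mul_nonpos_of_nonneg_of_nonpos (by linarith) (by linarith)
  linarith

lemma unique_sol (ha : ContinuousOn a (Set.Icc 0 1)) (hb : ContinuousOn b (Set.Icc 0 1))
    (ha0 : ∀ u ∈ Set.Icc (0:ℝ) 1, 0 ≤ a u)
    (hD1 : StrictMonoOn (primitive a) (Set.Icc 0 1))
    (hE1pos : ∀ u ∈ Set.Ioo (0:ℝ) 1, 0 < primitive b u)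
    {F : ℝ → ℝ} (hF : IsCDF F) (hS : IsStationarySolution (primitive a) (primitive b) F) :
    ∃ x0, ∀ u ∈ Ioo (0:ℝ) 1, pinv F u = Psi a b u + x0 := by
  have hFI := cdf_mem hF
  obtain ⟨A', hA'c, hA'e, CA, hCA⟩ := exists_ext (prim_cont_s17 ha)
  obtain ⟨B', hB'c, hB'e, CB, hCB⟩ := exists_ext (prim_cont_s17 hb)
  have h0I : (0:ℝ) ∈ Icc (0:ℝ) 1 := by simp
  have hloc : ∀ (A' : ℝ → ℝ) (C : ℝ), Continuous A' → (∀ u, ‖A' u‖ ≤ C) →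
      LocallyIntegrable (fun x => A' (F x)) := by
    intro A' C hc hC
    exact (memLp_top_of_bound (hc.measurable.comp hF.1.measurable).aestronglyMeasurable C
      (Eventually.of_forall fun x => hC (F x))).locallyIntegrable le_top
  have h_int := weak_to_integral (G := fun x => A' (F x)) (h := fun x => B' (F x))
    (hloc A' CA hA'c hCA) (hloc B' CB hB'c hCB)
    (fun x => hA'c.continuousAt.comp_continuousWithinAt (hF.2.1 x))
    (fun x => hB'c.continuousAt.comp_continuousWithinAt (hF.2.1 x))
    (by
      have := (hA'c.tendsto 0).comp hF.2.2.1
      rw [hA'e 0 h0I] at this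
      simpa [primitive, Function.comp_def] using this)
    (by
      have := (hB'c.tendsto 0).comp hF.2.2.1
      rw [hB'e 0 h0I] at this
      simpa [primitive, Function.comp_def] using this)
    (by
      intro φ hφ
      have := hS φ hφ.1 hφ.2
      simpa only [hA'e _ (hFI _), hB'e _ (hFI _)] using this)
  have hBi : ∀ x y, IntervalIntegrable (fun x => B' (F x)) volume x y := fun x y =>
    ((hloc B' CB hB'c hCB).integrableOn_isCompact isCompact_uIcc).intervalIntegrable
  have hGc : Continuous (fun x => A' (F x)) := by
    have : (fun x => A' (F x)) = fun x => A' (F 0) + 2 * ∫ t in (0:ℝ)..x, B' (F t) := by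
      funext x; linarith [h_int 0 x]
    rw [this]
    exact continuous_const.add (continuous_const.mul (intervalIntegral.continuous_primitive hBi 0))
  have hGc' : Continuous (fun x => primitive a (F x)) := by
    have : (fun x => primitive a (F x)) = fun x => A' (F x) :=
      funext fun x => (hA'e _ (hFI x)).symm
    rw [this]; exact hGc
  have hFc : Continuous F := by
    rw [continuous_iff_continuousAt]
    intro x
    refine tendsto_order.2 ⟨fun l hl => ?_, fun r hr => ?_⟩
    · by_cases hl0 : l < 0
      · exact Eventually.of_forall fun z => hl0.trans_le (hFI z).1
      push Not at hl0
      have hlI : l ∈ Icc (0:ℝ) 1 := ⟨hl0, hl.le.trans (hFI x).2⟩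
      filter_upwards [hGc'.continuousAt.eventually (lt_mem_nhds (hD1 hlI (hFI x) hl))] with z hz
      exact (hD1.lt_iff_lt hlI (hFI z)).1 hz
    · by_cases hr1 : 1 < r
      · exact Eventually.of_forall fun z => (hFI z).2.trans_lt hr1
      push Not at hr1
      have hrI : r ∈ Icc (0:ℝ) 1 := ⟨(hFI x).1.trans hr.le, hr1⟩
      filter_upwards [hGc'.continuousAt.eventually (gt_mem_nhds (hD1 (hFI x) hrI hr))] with z hz
      exact (hD1.lt_iff_lt (hFI z) hrI).1 hz
  have hhc : Continuous (fun x => B' (F x)) := hB'c.comp hFc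
  have hderG : ∀ x, HasDerivAt (fun x => primitive a (F x)) (2 * primitive b (F x)) x := by
    intro x
    have : (fun x => primitive a (F x)) = fun x => A' (F 0) + 2 * ∫ t in (0:ℝ)..x, B' (F t) := by
      funext x; rw [← hA'e _ (hFI x)]; linarith [h_int 0 x]
    rw [this, ← hB'e _ (hFI x)]
    exact ((intervalIntegral.integral_hasDerivAt_right (hBi 0 x)
      (hhc.stronglyMeasurableAtFilter _ _) hhc.continuousAt).const_mul 2).const_add _
  have hderP : ∀ x, F x ∈ Ioo (0:ℝ) 1 → HasDerivAt (fun x => Psi a b (F x)) 1 x := by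
    intro x hx
    have := deriv_transfer (α := a) (κ := fun u => (2 * primitive b u)⁻¹) (p := primitive a)
      (q := Psi a b) (ha.mono Ioo_subset_Icc_self)
      ((continuousOn_const.mul ((prim_cont_s17 hb).mono Ioo_subset_Icc_self)).inv₀
        fun u hu => (mul_pos two_pos (hE1pos u hu)).ne')
      (fun u hu => ha0 u (Ioo_subset_Icc_self hu))
      (fun u hu v hv => prim_sub_s17 ha u (Ioo_subset_Icc_self hu) v (Ioo_subset_Icc_self hv))
      (fun u hu v hv => by
        rw [psi_sub ha hb hE1pos u hu v hv]; simp only [div_eq_mul_inv])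
      hFc.continuousAt hx (hderG x)
    simpa [inv_mul_cancel₀ (mul_pos two_pos (hE1pos _ hx)).ne', -mul_inv_rev] using this
  have hlin : ∀ x y, F x ∈ Ioo (0:ℝ) 1 → F y ∈ Ioo (0:ℝ) 1 →
      Psi a b (F y) - Psi a b (F x) = y - x := by
    intro x y hx hy
    have hoc : OrdConnected (F ⁻¹' Ioo 0 1) := ordConnected_Ioo.preimage_mono hF.1
    have := intervalIntegral.integral_eq_sub_of_hasDerivAt (a := x) (b := y)
      (f := fun x => Psi a b (F x)) (f' := fun _ => (1:ℝ))
      (fun z hz => hderP z (hoc.uIcc_subset hx hy hz)) intervalIntegrable_const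
    rw [← this]; simp
  have hsurj : ∀ u ∈ Ioo (0:ℝ) 1, ∃ x, F x = u := by
    intro u hu
    obtain ⟨x, hx⟩ := (hF.2.2.1.eventually (gt_mem_nhds hu.1)).exists
    obtain ⟨y, hy⟩ := (hF.2.2.2.eventually (lt_mem_nhds hu.2)).exists
    exact mem_range_of_exists_le_of_exists_ge hFc ⟨x, hx.le⟩ ⟨y, hy.le⟩
  obtain ⟨x0, hx0⟩ := hsurj (1/2) (by constructor <;> norm_num)
  refine ⟨x0, fun u hu => ?_⟩
  obtain ⟨x, hx⟩ := hsurj u hu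
  have hset : {y : ℝ | u < F y} = Ioi x := by
    ext y
    simp only [mem_ofPred_eq, mem_Ioi]
    constructor
    · intro h
      by_contra hn
      have := hF.1 (not_lt.1 hn)
      rw [hx] at this
      linarith
    · intro h
      refine lt_of_le_of_ne (hx ▸ hF.1 h.le) fun he => ?_
      have := hlin x y (hx ▸ hu) (he ▸ hu)
      rw [hx, ← he] at this
      linarith
  rw [pinv, hset, csInf_Ioi]
  have := hlin x0 x (by rw [hx0]; constructor <;> norm_num) (hx ▸ hu)
  rw [hx, hx0] at this
  have h12 : Psi a b (1/2) = 0 := by simp [Psi]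
  linarith

lemma exists_sol (ha : ContinuousOn a (Set.Icc 0 1)) (hb : ContinuousOn b (Set.Icc 0 1))
    (ha0 : ∀ u ∈ Set.Icc (0:ℝ) 1, 0 ≤ a u)
    (hD1 : StrictMonoOn (primitive a) (Set.Icc 0 1))
    (hE1pos : ∀ u ∈ Set.Ioo (0:ℝ) 1, 0 < primitive b u) (hE1B1 : primitive b 1 = 0) :
    ∃ F, IsCDF F ∧ IsStationarySolution (primitive a) (primitive b) F ∧
      ∀ u ∈ Ioo (0:ℝ) 1, pinv F u = Psi a b u := by
  obtain ⟨F, hF, hFc, hFI, hinv, hpinv⟩ := inverse_props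
    (psi_strict ha hb ha0 hD1 hE1pos) (psi_cont ha hb hE1pos)
  refine ⟨F, hF, ?_, hpinv⟩
  have hGc : Continuous (fun x => primitive a (F x)) := (prim_cont_s17 ha).comp_continuous hFc hFI
  have hhc : Continuous (fun x => primitive b (F x)) := (prim_cont_s17 hb).comp_continuous hFc hFI
  have hB0 : primitive b 0 = 0 := by simp [primitive]
  have hder1 : ∀ x, F x ∈ Ioo (0:ℝ) 1 →
      HasDerivAt (fun x => primitive a (F x)) (2 * primitive b (F x)) x := by
    intro x hx
    have hid : HasDerivAt (fun y => Psi a b (F y)) 1 x := by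
      refine (hasDerivAt_id x).congr_of_eventuallyEq ?_
      filter_upwards [hFc.continuousAt.eventually (isOpen_Ioo.eventually_mem hx)] with y hy
      exact hinv y hy
    have := deriv_transfer (p := Psi a b) (q := primitive a) (κ := fun u => 2 * primitive b u)
      (g_cont ha hb hE1pos) (continuousOn_const.mul ((prim_cont_s17 hb).mono Ioo_subset_Icc_self))
      (g_nonneg ha0 hE1pos) (psi_sub ha hb hE1pos) (prim_sub' ha hE1pos) hFc.continuousAt hx hid
    simpa using this
  let E : ℝ → Set ℝ := fun c => {x | F x = c ∧ ¬ ∀ᶠ z in 𝓝 x, F z = c}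
  have hE0 : (E 0).Subsingleton := by
    have : ∀ x ∈ E 0, ∀ y ∈ E 0, ¬ x < y := by
      intro x hx y hy hxy
      apply hx.2
      filter_upwards [gt_mem_nhds hxy] with z hz
      exact le_antisymm (hy.1 ▸ hF.1 hz.le) (hFI z).1
    intro x hx y hy
    exact le_antisymm (not_lt.1 (this y hy x hx)) (not_lt.1 (this x hx y hy))
  have hE1 : (E 1).Subsingleton := by
    have : ∀ x ∈ E 1, ∀ y ∈ E 1, ¬ x < y := by
      intro x hx y hy hxy
      apply hy.2
      filter_upwards [lt_mem_nhds hxy] with z hz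
      exact le_antisymm (hFI z).2 (hx.1 ▸ hF.1 hz.le)
    intro x hx y hy
    exact le_antisymm (not_lt.1 (this y hy x hx)) (not_lt.1 (this x hx y hy))
  have hcount : (E 0 ∪ E 1).Countable := hE0.countable.union hE1.countable
  have hconst : ∀ c x, primitive b c = 0 → F x = c → x ∉ E c →
      HasDerivAt (fun x => primitive a (F x)) (2 * primitive b (F x)) x := by
    intro c x hc hx hn
    have hev : ∀ᶠ z in 𝓝 x, F z = c := by
      by_contra h; exact hn ⟨hx, h⟩
    rw [hx, hc, mul_zero]
    refine (hasDerivAt_const x (primitive a c)).congr_of_eventuallyEq ?_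
    filter_upwards [hev] with z hz
    rw [hz]
  have hder2 : ∀ x, x ∉ E 0 ∪ E 1 →
      HasDerivAt (fun x => primitive a (F x)) (2 * primitive b (F x)) x := by
    intro x hx
    rw [mem_union, not_or] at hx
    by_cases h0 : F x = 0
    · exact hconst 0 x hB0 h0 hx.1
    by_cases h1 : F x = 1
    · exact hconst 1 x hE1B1 h1 hx.2
    exact hder1 x ⟨lt_of_le_of_ne (hFI x).1 (Ne.symm h0), lt_of_le_of_ne (hFI x).2 h1⟩
  have hhc2 : Continuous (fun x => 2 * primitive b (F x)) := continuous_const.mul hhc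
  have hder : ∀ x, HasDerivAt (fun x => primitive a (F x)) (2 * primitive b (F x)) x := by
    intro x
    have e : (fun x => primitive a (F x))
        = fun x => primitive a (F 0) + ∫ t in (0:ℝ)..x, 2 * primitive b (F t) := by
      funext y
      have := MeasureTheory.integral_eq_of_hasDerivAt_off_countable
        (fun x => primitive a (F x)) (fun x => 2 * primitive b (F x)) (a := 0) (b := y) hcount
        hGc.continuousOn (fun x hx => hder2 x hx.2) (hhc2.intervalIntegrable _ _)
      linarith
    rw [e]
    exact (intervalIntegral.integral_hasDerivAt_right (hhc2.intervalIntegrable _ _)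
      (hhc2.stronglyMeasurableAtFilter _ _) hhc2.continuousAt).const_add _
  intro φ hφ hφc
  have ht : IsTest φ := ⟨hφ, hφc⟩
  have := integral_mul_deriv_eq_deriv_mul_of_integrable (u := fun x => primitive a (F x))
    (u' := fun x => 2 * primitive b (F x)) (v := deriv φ) (v' := deriv (deriv φ))
    (fun x _ => hder x) (fun x _ => ht.deriv'.hasDerivAt x)
    (ht.deriv'.deriv'.integrable_mul hGc.locallyIntegrable)
    (ht.deriv'.integrable_mul hhc2.locallyIntegrable)
    (ht.deriv'.integrable_mul hGc.locallyIntegrable)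
  rw [this]
  simp_rw [mul_assoc]
  rw [integral_const_mul]
  ring

end setup

/-- Under (D1) and (E1), the stationary solutions have a finite first moment if and
only if condition (E2) holds. -/
theorem stationary_solution_finite_first_moment_iff
    (a b : ℝ → ℝ)
    (ha : ContinuousOn a (Set.Icc 0 1)) (hb : ContinuousOn b (Set.Icc 0 1))
    (ha0 : ∀ u ∈ Set.Icc (0:ℝ) 1, 0 ≤ a u)
    (hD1 : StrictMonoOn (primitive a) (Set.Icc 0 1))
    (hE1pos : ∀ u ∈ Set.Ioo (0:ℝ) 1, 0 < primitive b u)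
    (hE1B1 : primitive b 1 = 0)
    (hE1loc : ∀ c d : ℝ, 0 < c → c ≤ d → d < 1 →
      IntegrableOn (fun u => a u / (2 * primitive b u)) (Set.Icc c d)) :
    (∀ F : ℝ → ℝ, IsCDF F → IsStationarySolution (primitive a) (primitive b) F →
        (∫⁻ u in Set.Ioo (0:ℝ) 1, ENNReal.ofReal |pinv F u|) < ⊤) ↔
    ((∫⁻ u in Set.Ioo (0:ℝ) (1/2),
        ENNReal.ofReal (a u * u / (2 * |primitive b u|)))
      + ∫⁻ u in Set.Ioo (1/2:ℝ) 1,
          ENNReal.ofReal (a u * (1 - u) / (2 * |primitive b u|))) < ⊤ := by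
  have hg := g_cont ha hb hE1pos
  have hg0 := g_nonneg (a := a) (b := b) ha0 hE1pos
  have hm := moment_eq hg hg0
  have e1 : (∫⁻ u in Set.Ioo (0:ℝ) (1/2), ENNReal.ofReal (a u * u / (2 * |primitive b u|)))
      = ∫⁻ u in Ioo (0:ℝ) (1/2), ENNReal.ofReal (a u / (2 * primitive b u) * u) := by
    refine setLIntegral_congr_fun measurableSet_Ioo fun u hu => ?_
    have huI : u ∈ Ioo (0:ℝ) 1 := ⟨hu.1, by linarith [hu.2]⟩
    rw [abs_of_pos (hE1pos u huI), div_mul_eq_mul_div]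
  have e2 : (∫⁻ u in Set.Ioo (1/2:ℝ) 1, ENNReal.ofReal (a u * (1 - u) / (2 * |primitive b u|)))
      = ∫⁻ u in Ioo (1/2:ℝ) 1, ENNReal.ofReal (a u / (2 * primitive b u) * (1 - u)) := by
    refine setLIntegral_congr_fun measurableSet_Ioo fun u hu => ?_
    have huI : u ∈ Ioo (0:ℝ) 1 := ⟨by linarith [hu.1], hu.2⟩
    rw [abs_of_pos (hE1pos u huI), div_mul_eq_mul_div]
  rw [e1, e2, ← hm]
  constructor
  · intro h
    obtain ⟨F, hF, hS, hp⟩ := exists_sol ha hb ha0 hD1 hE1pos hE1B1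
    have := h F hF hS
    rwa [setLIntegral_congr_fun (g := fun u => ENNReal.ofReal |Psi a b u|) measurableSet_Ioo
      (fun u hu => by simp only [hp u hu])] at this
  · intro h F hF hS
    obtain ⟨x0, hx0⟩ := unique_sol ha hb ha0 hD1 hE1pos hF hS
    calc ∫⁻ u in Set.Ioo (0:ℝ) 1, ENNReal.ofReal |pinv F u|
        ≤ ∫⁻ u in Set.Ioo (0:ℝ) 1, (ENNReal.ofReal |Psi a b u| + ENNReal.ofReal |x0|) := by
          refine setLIntegral_mono' measurableSet_Ioo fun u hu => ?_
          rw [hx0 u hu, ← ENNReal.ofReal_add (abs_nonneg _) (abs_nonneg _)]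
          exact ENNReal.ofReal_le_ofReal (abs_add_le _ _)
      _ = (∫⁻ u in Set.Ioo (0:ℝ) 1, ENNReal.ofReal |Psi a b u|)
          + ∫⁻ u in Set.Ioo (0:ℝ) 1, ENNReal.ofReal |x0| :=
          lintegral_add_right _ measurable_const
      _ < ⊤ := by
          refine ENNReal.add_lt_top.2 ⟨h, ?_⟩
          simp
end
end
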